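/- arXiv:1911.04807 — 2 statements merged into one kernel-verified Lean document; each statement's English description precedes it below -/
import Mathlib

section
/- Assume (X, d, μ) is complete, μ is Borel-regular and doubling, and X supports a weak 1-Poincaré inequality. Let G ⊂ X be a domain with compact closure, let E, F ⊂ G be disjoint continua each containing at least two points, and for each natural number j ≥ 1 let Γ*_j(E, F; G) be the subfamily of Γ*(E, F; G) consisting of those separating sets S with dist(S, E ∪ F) > 1/j. Then for every 1 < q < ∞, lim_{j→∞} mod_q Γ*_j(E, F; G) = mod_q Γ*(E, F; G). -/
open MeasureTheory Metric Set ENNReal NNReal Filter Topology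

noncomputable section

variable {X : Type*}

/-- A measure is Borel-regular: every set is contained in a Borel set of the same measure. -/
def BorelRegular [MeasurableSpace X] (μ : Measure X) : Prop :=
  ∀ s : Set X, ∃ t : Set X, MeasurableSet t ∧ s ⊆ t ∧ μ t = μ s

/-- μ is doubling with constant `Cμ`: `0 < μ(2B) ≤ Cμ μ(B) < ∞` for all balls. -/
def IsDoublingWith [PseudoMetricSpace X] [MeasurableSpace X] (μ : Measure X) (Cμ : ℝ) : Prop :=
  ∀ (x : X) (r : ℝ), 0 < r →
    0 < μ (ball x (2 * r)) ∧ μ (ball x (2 * r)) ≤ ENNReal.ofReal Cμ * μ (ball x r) ∧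
      μ (ball x r) < ⊤

/-- `ρ` is an upper gradient of `u` on the set `V`: for every `L ≥ 0` and every
1-Lipschitz curve `γ : [0, L] → V`, `|u(γ L) − u(γ 0)| ≤ ∫₀^L ρ(γ t) dt`. -/
def IsUpperGradientOn [PseudoMetricSpace X] (u : X → ℝ) (ρ : X → ℝ≥0∞) (V : Set X) : Prop :=
  ∀ L : ℝ, 0 ≤ L → ∀ γ : ℝ → X, LipschitzOnWith 1 γ (Icc 0 L) → MapsTo γ (Icc 0 L) V →
    ENNReal.ofReal |u (γ L) - u (γ 0)| ≤ ∫⁻ t in Icc 0 L, ρ (γ t)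

/-- `X` supports a weak `p`-Poincaré inequality with constants `CP`, `lP`. -/
def WeakPoincare [PseudoMetricSpace X] [MeasurableSpace X] (μ : Measure X)
    (p CP lP : ℝ) : Prop :=
  ∀ u : X → ℝ, LocallyIntegrable u μ →
    ∀ ρ : X → ℝ≥0∞, Measurable ρ → IsUpperGradientOn u ρ univ →
    ∀ (x : X) (r : ℝ), 0 < r →
      ENNReal.ofReal (⨍ y in ball x r, |u y - ⨍ z in ball x r, u z ∂μ| ∂μ) ≤
        ENNReal.ofReal (CP * diam (ball x r)) *
          (⨍⁻ y in ball x (lP * r), ρ y ^ p ∂μ) ^ (1 / p)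

/-- `X` is Ahlfors `Q`-regular with constants `0 < a ≤ A`. -/
def AhlforsRegular [PseudoMetricSpace X] [MeasurableSpace X] (μ : Measure X)
    (Q a A : ℝ) : Prop :=
  0 < a ∧ a ≤ A ∧ ∀ (x : X) (r : ℝ), 0 < r → ENNReal.ofReal r < EMetric.diam (univ : Set X) →
    ENNReal.ofReal (a * r ^ Q) ≤ μ (ball x r) ∧ μ (ball x r) ≤ ENNReal.ofReal (A * r ^ Q)

/-- `ρ` is admissible for a family `M` of Borel measures: `∫ ρ dν ≥ 1` for all `ν ∈ M`. -/
def Admissible [MeasurableSpace X] (M : Set (Measure X)) (ρ : X → ℝ≥0∞) : Prop :=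
  Measurable ρ ∧ ∀ ν ∈ M, 1 ≤ ∫⁻ x, ρ x ∂ν

/-- The `q`-modulus of a family of Borel measures. -/
def modulus [MeasurableSpace X] (μ : Measure X) (q : ℝ) (M : Set (Measure X)) : ℝ≥0∞ :=
  ⨅ (ρ : X → ℝ≥0∞) (_ : Admissible M ρ), ∫⁻ x, ρ x ^ q ∂μ

/-- `ρ` is `q`-weakly admissible for `M`. -/
def WeaklyAdmissible [MeasurableSpace X] (μ : Measure X) (q : ℝ) (M : Set (Measure X))
    (ρ : X → ℝ≥0∞) : Prop :=
  ∃ N ⊆ M, modulus μ q N = 0 ∧ Admissible (M \ N) ρ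

/-- The family `Γ(E, F; G)` of measures `H¹` restricted to images of injective rectifiable
curves joining `E` and `F` in `G`. -/
def pathFamily [MetricSpace X] [MeasurableSpace X] [BorelSpace X] (E F G : Set X) :
    Set (Measure X) :=
  {ν | ∃ γ : ℝ → X, ContinuousOn γ (Icc 0 1) ∧ InjOn γ (Icc 0 1) ∧
    eVariationOn γ (Icc 0 1) ≠ ⊤ ∧ MapsTo γ (Icc 0 1) G ∧ γ 0 ∈ E ∧ γ 1 ∈ F ∧
    ν = (μH[1]).restrict (γ '' Icc 0 1)}

/-- `S` separates `E` from `F` in `G`: they lie in different connected components of `G \ S`. -/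
def SeparatesIn [TopologicalSpace X] (S E F G : Set X) : Prop :=
  ∃ x ∈ G \ S, ∃ y ∈ G \ S,
    E ⊆ connectedComponentIn (G \ S) x ∧ F ⊆ connectedComponentIn (G \ S) y ∧
    connectedComponentIn (G \ S) x ≠ connectedComponentIn (G \ S) y

/-- The family `Γ*(E, F; G)` of measures `H^d` restricted to `S ∩ G`, where `S` ranges over
compact subsets of the closure of `G`, of finite `H^d`-measure in `G`, separating `E` and `F`. -/
def surfaceFamilyH [MetricSpace X] [MeasurableSpace X] [BorelSpace X] (d : ℝ)
    (E F G : Set X) : Set (Measure X) :=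
  {ν | ∃ S : Set X, IsCompact S ∧ S ⊆ closure G ∧ μH[d] (S ∩ G) ≠ ⊤ ∧
    SeparatesIn S E F G ∧ ν = (μH[d]).restrict (S ∩ G)}

/-- The codimension-1 spherical Hausdorff measure associated to `μ`. -/
def codimOneHausdorff [PseudoMetricSpace X] [MeasurableSpace X] (μ : Measure X)
    (A : Set X) : ℝ≥0∞ :=
  ⨆ (δ : ℝ) (_ : 0 < δ),
    ⨅ (c : ℕ → X) (r : ℕ → ℝ) (_ : A ⊆ ⋃ i, ball (c i) (r i))
      (_ : ∀ i, 0 < r i ∧ r i ≤ δ), ∑' i, μ (ball (c i) (r i)) / ENNReal.ofReal (r i)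

/-- The integral `∫_A g d𝓗` of `g` over `A` against the codimension-1 spherical Hausdorff
measure, defined by the layer-cake formula. -/
def codimIntegral [PseudoMetricSpace X] [MeasurableSpace X] (μ : Measure X) (A : Set X)
    (g : X → ℝ≥0∞) : ℝ≥0∞ :=
  ∫⁻ s in Ioi (0 : ℝ), codimOneHausdorff μ (A ∩ {x | ENNReal.ofReal s < g x})

/-- The collection of "surfaces" of `Γ*(E, F; G)`: compact subsets of the closure of `G` of
finite codimension-1 measure in `G` separating `E` and `F` in `G`. -/
def surfaceSets [PseudoMetricSpace X] [MeasurableSpace X] (μ : Measure X) (E F G : Set X) :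
    Set (Set X) :=
  {S | IsCompact S ∧ S ⊆ closure G ∧ codimOneHausdorff μ (S ∩ G) ≠ ⊤ ∧ SeparatesIn S E F G}

/-- The `q`-modulus of a family `𝒮` of surfaces, each equipped with the codimension-1
spherical Hausdorff measure restricted to `S ∩ G`. -/
def surfModulus [PseudoMetricSpace X] [MeasurableSpace X] (μ : Measure X) (q : ℝ)
    (𝒮 : Set (Set X)) (G : Set X) : ℝ≥0∞ :=
  ⨅ (ρ : X → ℝ≥0∞)
    (_ : Measurable ρ ∧ ∀ S ∈ 𝒮, 1 ≤ codimIntegral μ (S ∩ G) ρ),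
    ∫⁻ x, ρ x ^ q ∂μ

/-- The upper Lebesgue integral of `f` over `s ⊆ ℝ`. -/
def upperIntegralOn (s : Set ℝ) (f : ℝ → ℝ≥0∞) : ℝ≥0∞ :=
  ⨅ (ψ : ℝ → ℝ≥0∞) (_ : Measurable ψ ∧ ∀ t, f t ≤ ψ t), ∫⁻ t in s, ψ t

/-- The restricted Hardy–Littlewood maximal function `M_R w`. -/
def restrMaximal [PseudoMetricSpace X] [MeasurableSpace X] (μ : Measure X) (R : ℝ)
    (w : X → ℝ≥0∞) (x : X) : ℝ≥0∞ :=
  ⨆ (r : ℝ) (_ : 0 < r ∧ r ≤ R), ⨍⁻ y in ball x r, w y ∂μ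

/-- `x` is a Lebesgue point of `v`. -/
def LebesguePoint [PseudoMetricSpace X] [MeasurableSpace X] (μ : Measure X) (v : X → ℝ)
    (x : X) : Prop :=
  Tendsto (fun r : ℝ => ⨍ y in ball x r, |v y - v x| ∂μ) (𝓝[>] 0) (𝓝 0)

/-- `u` is locally Lipschitz on `G`. -/
def IsLocallyLipschitzOn [PseudoMetricSpace X] (u : X → ℝ) (G : Set X) : Prop :=
  ∀ x ∈ G, ∃ (K : ℝ≥0) (t : Set X), t ∈ 𝓝[G] x ∧ LipschitzOnWith K u t

/-- `X` is a geodesic metric space. -/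
def IsGeodesicSpace (X : Type*) [MetricSpace X] : Prop :=
  ∀ x y : X, ∃ γ : ℝ → X, γ 0 = x ∧ γ (dist x y) = y ∧
    ∀ s ∈ Icc (0 : ℝ) (dist x y), ∀ t ∈ Icc (0 : ℝ) (dist x y), dist (γ s) (γ t) = |s - t|

/-- `G` is a domain (open connected set) with compact closure. -/
def IsDomainWithCompactClosure [TopologicalSpace X] (G : Set X) : Prop :=
  IsOpen G ∧ IsConnected G ∧ IsCompact (closure G)

/-- `E` is a nondegenerate continuum: compact, connected, with at least two points. -/
def IsNondegContinuum [TopologicalSpace X] (E : Set X) : Prop :=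
  IsCompact E ∧ IsConnected E ∧ E.Nontrivial

/-- The distance between two sets. -/
def setDist [PseudoMetricSpace X] (E F : Set X) : ℝ :=
  sInf ((fun p : X × X => dist p.1 p.2) '' (E ×ˢ F))

/-- The `s`-dimensional Hausdorff content. -/
def hContent {Y : Type*} [EMetricSpace Y] (s : ℝ) (E : Set Y) : ℝ≥0∞ :=
  ⨅ (U : ℕ → Set Y) (_ : E ⊆ ⋃ i, U i), ∑' i, EMetric.diam (U i) ^ s

end


/-! ### A pointwise uniform convexity inequality -/

lemma unif_conv_real (q : ℝ) (hq : 1 < q) (ε : ℝ) (hε : 0 < ε) :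
    ∃ C : ℝ, 0 ≤ C ∧ ∀ t ∈ Icc (0 : ℝ) 1,
      (1 - t) ^ q + C * ((t + 1) / 2) ^ q ≤ (ε + C / 2) * (t ^ q + 1) := by
  have hq0 : 0 ≤ q := by linarith
  have hc : ∀ t ∈ Icc (0 : ℝ) 1, ((t + 1) / 2) ^ q ≤ (t ^ q + 1) / 2 := by
    intro t ht
    have := (strictConvexOn_rpow hq).convexOn.2 (show t ∈ Ici (0 : ℝ) from ht.1)
      (show (1 : ℝ) ∈ Ici (0 : ℝ) by simp)
      (show (0 : ℝ) ≤ 1 / 2 by norm_num) (show (0 : ℝ) ≤ 1 / 2 by norm_num) (by norm_num)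
    simp only [smul_eq_mul, Real.one_rpow] at this
    calc ((t + 1) / 2) ^ q = (1 / 2 * t + 1 / 2 * 1) ^ q := by ring_nf
      _ ≤ _ := this
      _ = _ := by ring
  have hcs : ∀ t ∈ Icc (0 : ℝ) 1, t ≠ 1 → ((t + 1) / 2) ^ q < (t ^ q + 1) / 2 := by
    intro t ht h1
    have := (strictConvexOn_rpow hq).2 (show t ∈ Ici (0 : ℝ) from ht.1)
      (show (1 : ℝ) ∈ Ici (0 : ℝ) by simp) h1
      (show (0 : ℝ) < 1 / 2 by norm_num) (show (0 : ℝ) < 1 / 2 by norm_num) (by norm_num)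
    simp only [smul_eq_mul, Real.one_rpow] at this
    calc ((t + 1) / 2) ^ q = (1 / 2 * t + 1 / 2 * 1) ^ q := by ring_nf
      _ < _ := this
      _ = _ := by ring
  have hcont1 : Continuous fun t : ℝ => (1 - t) ^ q :=
    (continuous_const.sub continuous_id).rpow_const (fun _ => Or.inr hq0)
  have hcont2 : Continuous fun t : ℝ => (t ^ q + 1) / 2 - ((t + 1) / 2) ^ q := by
    refine Continuous.sub ?_ ?_
    · exact ((continuous_id.rpow_const (fun _ => Or.inr hq0)).add continuous_const).div_const 2
    · exact ((continuous_id.add continuous_const).div_const 2).rpow_const (fun _ => Or.inr hq0)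
  set K : Set ℝ := Icc 0 1 ∩ {t | ε ≤ (1 - t) ^ q} with hK
  have hKc : IsCompact K := isCompact_Icc.inter_right (isClosed_le continuous_const hcont1)
  have hout : ∀ C : ℝ, 0 ≤ C → ∀ t ∈ Icc (0 : ℝ) 1, t ∉ K →
      (1 - t) ^ q + C * ((t + 1) / 2) ^ q ≤ (ε + C / 2) * (t ^ q + 1) := by
    intro C hC t ht htK
    have h1 : (1 - t) ^ q < ε := by
      by_contra h
      exact htK ⟨ht, not_lt.1 h⟩
    have h2 := mul_le_mul_of_nonneg_left (hc t ht) hC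
    have h3 : 0 ≤ t ^ q := Real.rpow_nonneg ht.1 q
    nlinarith [mul_nonneg hε.le h3]
  rcases K.eq_empty_or_nonempty with h0 | hne
  · exact ⟨0, le_rfl, fun t ht => hout 0 le_rfl t ht (by simp [h0])⟩
  · obtain ⟨t0, ht0, hmin⟩ := hKc.exists_isMinOn hne hcont2.continuousOn
    set δ := (t0 ^ q + 1) / 2 - ((t0 + 1) / 2) ^ q with hδ
    have hδ0 : 0 < δ := by
      have : t0 ≠ 1 := by
        rintro rfl
        have := ht0.2
        simp only [mem_ofPred_eq, sub_self] at this
        rw [Real.zero_rpow (by linarith)] at this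
        linarith
      have := hcs t0 ht0.1 this
      linarith
    refine ⟨1 / δ, by positivity, fun t ht => ?_⟩
    by_cases htK : t ∈ K
    · have h1 : δ ≤ (t ^ q + 1) / 2 - ((t + 1) / 2) ^ q := hmin htK
      have h2 : (1 - t) ^ q ≤ 1 :=
        Real.rpow_le_one (by linarith [ht.2]) (by linarith [ht.1]) hq0
      have h3 : 0 ≤ t ^ q := Real.rpow_nonneg ht.1 q
      have h4 : 1 ≤ 1 / δ * ((t ^ q + 1) / 2 - ((t + 1) / 2) ^ q) := by
        rw [one_div, ← div_eq_inv_mul, le_div_iff₀ hδ0]; linarith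
      nlinarith [mul_nonneg hε.le h3]
    · exact hout _ (by positivity) t ht htK

lemma unif_conv_real2 (q : ℝ) (hq : 1 < q) (ε : ℝ) (hε : 0 < ε) :
    ∃ C : ℝ, 0 ≤ C ∧ ∀ a b : ℝ, 0 ≤ a → a ≤ b →
      (b - a) ^ q + C * ((a + b) / 2) ^ q ≤ (ε + C / 2) * (a ^ q + b ^ q) := by
  obtain ⟨C, hC, h⟩ := unif_conv_real q hq ε hε
  refine ⟨C, hC, fun a b ha hab => ?_⟩
  rcases (ha.trans hab).eq_or_lt with hb | hb
  · have : a = 0 := by linarith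
    subst this
    rw [← hb]
    simp [Real.zero_rpow (show q ≠ 0 by linarith)]
  · have ht : a / b ∈ Icc (0 : ℝ) 1 := ⟨by positivity, (div_le_one hb).2 hab⟩
    have h1 := mul_le_mul_of_nonneg_right (h _ ht) (Real.rpow_nonneg hb.le q)
    have e1 : (1 - a / b) ^ q * b ^ q = (b - a) ^ q := by
      rw [← Real.mul_rpow (by linarith [ht.2]) hb.le]; congr 1; field_simp
    have e2 : ((a / b + 1) / 2) ^ q * b ^ q = ((a + b) / 2) ^ q := by
      rw [← Real.mul_rpow (by linarith [ht.1]) hb.le]; congr 1; field_simp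
    have e3 : (a / b) ^ q * b ^ q = a ^ q := by
      rw [← Real.mul_rpow ht.1 hb.le]; congr 1; field_simp
    calc _ = (1 - a / b) ^ q * b ^ q + C * (((a / b + 1) / 2) ^ q * b ^ q) := by rw [e1, e2]
      _ = ((1 - a / b) ^ q + C * ((a / b + 1) / 2) ^ q) * b ^ q := by ring
      _ ≤ _ := h1
      _ = (ε + C / 2) * ((a / b) ^ q * b ^ q + b ^ q) := by ring
      _ = _ := by rw [e3]

lemma unif_conv_ennreal (q : ℝ) (hq : 1 < q) (ε : ℝ≥0) (hε : 0 < ε) :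
    ∃ C : ℝ≥0, ∀ a b : ℝ≥0∞,
      (b - a) ^ q + C * ((a + b) / 2) ^ q ≤ (ε + C / 2) * (a ^ q + b ^ q) := by
  have hq0 : 0 < q := by linarith
  obtain ⟨C, hC, h⟩ := unif_conv_real2 q hq ε hε
  refine ⟨⟨C, hC⟩, fun a b => ?_⟩
  set C' : ℝ≥0 := ⟨C, hC⟩ with hC'
  have hne : ((ε : ℝ≥0∞) + C' / 2) ≠ 0 := by
    have : (ε : ℝ≥0∞) ≠ 0 := by simpa using hε.ne'
    simp [this]
  by_cases ha : a = ⊤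
  · subst ha; simp [ENNReal.top_rpow_of_pos hq0, ENNReal.mul_top hne]
  by_cases hb : b = ⊤
  · subst hb; simp [ENNReal.top_rpow_of_pos hq0, ENNReal.mul_top hne]
  lift a to ℝ≥0 using ha
  lift b to ℝ≥0 using hb
  have key : (b - a) ^ q + C' * ((a + b) / 2) ^ q ≤ (ε + C' / 2) * (a ^ q + b ^ q) := by
    rcases le_total a b with hab | hab
    · have := h a b a.2 hab
      rw [← NNReal.coe_le_coe]
      push_cast [hab]
      exact this
    · have h1 := h b a b.2 hab
      have h2 : 0 ≤ ((a : ℝ) - b) ^ q := Real.rpow_nonneg (by simpa using hab) q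
      rw [tsub_eq_zero_of_le hab, NNReal.zero_rpow hq0.ne', zero_add, ← NNReal.coe_le_coe]
      push_cast
      rw [add_comm (a : ℝ), add_comm ((a : ℝ) ^ q)]
      change C * _ ≤ (ε + C / 2) * _
      linarith
  have e2 : ((2 : ℝ≥0) : ℝ≥0∞) = 2 := rfl
  rw [← ENNReal.coe_sub, ← ENNReal.coe_add, ← e2, ← ENNReal.coe_div two_ne_zero,
    ← ENNReal.coe_div two_ne_zero,
    ← ENNReal.coe_rpow_of_nonneg _ hq0.le, ← ENNReal.coe_rpow_of_nonneg _ hq0.le,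
    ← ENNReal.coe_rpow_of_nonneg _ hq0.le, ← ENNReal.coe_rpow_of_nonneg _ hq0.le]
  exact_mod_cast key

/-! ### The codimension one Hausdorff measure is a metric outer measure -/

/-- Gauge on sets: cheapest single ball of radius at most `δ` containing the set. -/
noncomputable def codimGauge {X : Type*} [MetricSpace X] [MeasurableSpace X] (μ : Measure X) (δ : ℝ)
    (s : Set X) : ℝ≥0∞ :=
  ⨅ (x : X) (r : ℝ) (_ : s ⊆ ball x r) (_ : 0 < r ∧ r ≤ δ), μ (ball x r) / ENNReal.ofReal r

lemma codimGauge_ball_le {X : Type*} [MetricSpace X] [MeasurableSpace X] (μ : Measure X) (δ : ℝ)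
    {s : Set X} {x : X} {r : ℝ} (hs : s ⊆ ball x r) (hr : 0 < r ∧ r ≤ δ) :
    codimGauge μ δ s ≤ μ (ball x r) / ENNReal.ofReal r :=
  iInf_le_of_le x <| iInf_le_of_le r <| iInf_le_of_le hs <| iInf_le_of_le hr le_rfl

lemma codimOneHausdorff_bad {X : Type*} [MetricSpace X] [MeasurableSpace X] (μ : Measure X)
    (δ : ℝ) (hδ : 0 < δ) (h : codimGauge μ δ ∅ ≠ 0) (A : Set X) :
    codimOneHausdorff μ A = ⊤ := by
  rw [eq_top_iff]
  refine le_iSup₂_of_le δ hδ ?_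
  refine le_iInf fun c => le_iInf fun r => le_iInf fun _ => le_iInf fun hr => ?_
  rw [← ENNReal.tsum_const_eq_top_of_ne_zero (α := ℕ) h]
  exact ENNReal.tsum_le_tsum fun i => codimGauge_ball_le μ δ (empty_subset _) (hr i)

lemma codimOneHausdorff_good {X : Type*} [MetricSpace X] [MeasurableSpace X] [BorelSpace X]
    (μ : Measure X) (h : ∀ δ : ℝ, 0 < δ → codimGauge μ δ ∅ = 0) :
    ∃ ν : Measure X, ∀ s, MeasurableSet s → ν s = codimOneHausdorff μ s := by
  let m : {δ : ℝ // 0 < δ} → OuterMeasure X := fun δ =>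
    OuterMeasure.ofFunction (codimGauge μ δ) (h δ δ.2)
  have hm : ∀ (δ : {δ : ℝ // 0 < δ}) (A : Set X), m δ A =
      ⨅ (c : ℕ → X) (r : ℕ → ℝ) (_ : A ⊆ ⋃ i, ball (c i) (r i))
      (_ : ∀ i, 0 < r i ∧ r i ≤ δ), ∑' i, μ (ball (c i) (r i)) / ENNReal.ofReal (r i) := by
    intro δ A
    rw [OuterMeasure.ofFunction_apply]
    apply le_antisymm
    · refine le_iInf fun c => le_iInf fun r => le_iInf fun hA => le_iInf fun hr => ?_
      refine iInf₂_le_of_le (fun i => ball (c i) (r i)) hA ?_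
      exact ENNReal.tsum_le_tsum fun i => codimGauge_ball_le μ δ subset_rfl (hr i)
    · refine le_iInf₂ fun t ht => ?_
      refine ENNReal.le_of_forall_pos_le_add fun ε hε hfin => ?_
      obtain ⟨ε', hε', hsum⟩ := ENNReal.exists_pos_sum_of_countable'
        (ENNReal.coe_pos.2 hε).ne' ℕ
      have hex : ∀ i, ∃ x : X, ∃ r : ℝ, t i ⊆ ball x r ∧ (0 < r ∧ r ≤ δ) ∧
          μ (ball x r) / ENNReal.ofReal r ≤ codimGauge μ δ (t i) + ε' i := by
        intro i
        have hi : codimGauge μ δ (t i) ≠ ⊤ := ne_top_of_le_ne_top hfin.ne (ENNReal.le_tsum i)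
        have hlt : codimGauge μ δ (t i) < codimGauge μ δ (t i) + ε' i :=
          ENNReal.lt_add_right hi (hε' i).ne'
        conv_lhs at hlt => unfold codimGauge
        simp only [iInf_lt_iff] at hlt
        obtain ⟨x, r, h1, h2, h3⟩ := hlt
        exact ⟨x, r, h1, h2, h3.le⟩
      choose c r h1 h2 h3 using hex
      refine iInf_le_of_le c <| iInf_le_of_le r <|
        iInf_le_of_le (ht.trans (iUnion_mono h1)) <| iInf_le_of_le h2 ?_
      calc _ ≤ ∑' i, (codimGauge μ δ (t i) + ε' i) := ENNReal.tsum_le_tsum h3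
        _ = _ := ENNReal.tsum_add
        _ ≤ _ := by gcongr
  let H : OuterMeasure X := ⨆ δ, m δ
  have hH : ∀ A, H A = codimOneHausdorff μ A := by
    intro A
    rw [OuterMeasure.iSup_apply, codimOneHausdorff, iSup_subtype']
    exact iSup_congr fun δ => hm δ A
  have hanti : ∀ δ δ' : {δ : ℝ // 0 < δ}, δ.1 ≤ δ'.1 → ∀ A, m δ' A ≤ m δ A := by
    intro δ δ' hd A
    rw [hm, hm]
    refine le_iInf fun c => le_iInf fun r => le_iInf fun hA => le_iInf fun hr => ?_
    exact iInf_le_of_le c <| iInf_le_of_le r <|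
        iInf_le_of_le hA <| iInf_le_of_le (fun i => ⟨(hr i).1, (hr i).2.trans hd⟩) le_rfl
  have hmet : H.IsMetric := by
    rintro s t ⟨e, he, hst⟩
    refine le_antisymm (measure_union_le _ _) ?_
    obtain ⟨e', he'0, he'⟩ : ∃ e' : ℝ, 0 < e' ∧ ENNReal.ofReal (2 * e') ≤ e := by
      by_cases hetop : e = ⊤
      · exact ⟨1, one_pos, by simp [hetop]⟩
      · refine ⟨e.toReal / 2, by have := ENNReal.toReal_pos he hetop; positivity, ?_⟩
        rw [mul_div_cancel₀ _ two_ne_zero, ENNReal.ofReal_toReal hetop]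
    have hadd : ∀ δ : {δ : ℝ // 0 < δ}, δ.1 ≤ e' → m δ s + m δ t ≤ H (s ∪ t) := by
      intro δ hδ
      have : m δ (s ∪ t) = m δ s + m δ t := by
        refine OuterMeasure.ofFunction_union_of_top_of_nonempty_inter ?_
        rintro u ⟨x, hxs, hxu⟩ ⟨y, hyt, hyu⟩
        rw [eq_top_iff]
        refine le_iInf fun c => le_iInf fun r => le_iInf fun hu => le_iInf fun hr => ?_
        exfalso
        have h1 := hst x hxs y hyt
        have h2 : dist x y < 2 * e' := by
          have a := hu hxu
          have b := hu hyu
          rw [mem_ball] at a b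
          have := dist_triangle_right x y c
          linarith [hr.2]
        rw [edist_dist] at h1
        have h3 := (ENNReal.ofReal_lt_ofReal_iff (by linarith)).2 h2
        exact absurd (he'.trans h1) (not_le.2 h3)
      rw [← this, OuterMeasure.iSup_apply]
      exact le_iSup (fun δ => m δ (s ∪ t)) δ
    rw [OuterMeasure.iSup_apply, OuterMeasure.iSup_apply (s := t)]
    refine ENNReal.iSup_add_iSup_le fun δ₁ δ₂ => ?_
    have hpos : 0 < min e' (min δ₁.1 δ₂.1) := lt_min he'0 (lt_min δ₁.2 δ₂.2)
    refine le_trans ?_ (hadd ⟨_, hpos⟩ (min_le_left _ _))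
    refine add_le_add ?_ ?_
    · exact hanti ⟨_, hpos⟩ δ₁ ((min_le_right _ _).trans (min_le_left _ _)) s
    · exact hanti ⟨_, hpos⟩ δ₂ ((min_le_right _ _).trans (min_le_right _ _)) t
  have hle : (inferInstance : MeasurableSpace X) ≤ H.caratheodory := by
    have := hmet.borel_le_caratheodory
    rwa [← BorelSpace.measurable_eq (α := X)] at this
  exact ⟨H.toMeasure hle, fun s hs => by rw [toMeasure_apply _ _ hs, hH]⟩

/-- Layer cake formula for extended nonnegative functions. -/
lemma lintegral_layer_cake {X : Type*} [MeasurableSpace X] (ν : Measure X) [IsFiniteMeasure ν]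
    (g : X → ℝ≥0∞) (hg : Measurable g) :
    ∫⁻ s in Ioi (0 : ℝ), ν {x | ENNReal.ofReal s < g x} = ∫⁻ x, g x ∂ν := by
  have hms : MeasurableSet {p : ℝ × X | ENNReal.ofReal p.1 < g p.2} :=
    measurableSet_lt (ENNReal.measurable_ofReal.comp measurable_fst) (hg.comp measurable_snd)
  have h1 := Measure.prod_apply (μ := volume.restrict (Ioi (0 : ℝ))) (ν := ν) hms
  have h2 := Measure.prod_apply_symm (μ := volume.restrict (Ioi (0 : ℝ))) (ν := ν) hms
  rw [h1] at h2
  refine Eq.trans h2 (lintegral_congr fun x => ?_)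
  have hpre : MeasurableSet ((fun s : ℝ => (s, x)) ⁻¹' {p : ℝ × X | ENNReal.ofReal p.1 < g p.2}) :=
    measurable_prodMk_right hms
  rw [Measure.restrict_apply hpre]
  by_cases hx : g x = ⊤
  · have : ((fun s : ℝ => (s, x)) ⁻¹' {p : ℝ × X | ENNReal.ofReal p.1 < g p.2}) ∩ Ioi 0
        = Ioi 0 := by
      ext s; simp [hx]
    rw [this, hx, Real.volume_Ioi]
  · have : ((fun s : ℝ => (s, x)) ⁻¹' {p : ℝ × X | ENNReal.ofReal p.1 < g p.2}) ∩ Ioi 0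
        = Ioo 0 (g x).toReal := by
      ext s
      simp only [mem_inter_iff, mem_preimage, mem_ofPred_eq, mem_Ioi, mem_Ioo]
      constructor
      · rintro ⟨a, b⟩
        exact ⟨b, (ENNReal.ofReal_lt_iff_lt_toReal b.le hx).1 a⟩
      · rintro ⟨a, b⟩
        exact ⟨(ENNReal.ofReal_lt_iff_lt_toReal a.le hx).2 b, a⟩
    rw [this, Real.volume_Ioo, sub_zero, ENNReal.ofReal_toReal hx]

lemma codimOneHausdorff_mono {X : Type*} [MetricSpace X] [MeasurableSpace X] (μ : Measure X)
    {A B : Set X} (h : A ⊆ B) : codimOneHausdorff μ A ≤ codimOneHausdorff μ B := by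
  refine iSup₂_mono fun δ hδ => ?_
  refine le_iInf fun c => le_iInf fun r => le_iInf fun hA => le_iInf fun hr => ?_
  exact iInf_le_of_le c <| iInf_le_of_le r <|
    iInf_le_of_le (h.trans hA) <| iInf_le_of_le hr le_rfl

lemma codimIntegral_mono {X : Type*} [MetricSpace X] [MeasurableSpace X] (μ : Measure X)
    (A : Set X) {f g : X → ℝ≥0∞} (h : ∀ x, f x ≤ g x) :
    codimIntegral μ A f ≤ codimIntegral μ A g := by
  refine lintegral_mono fun s => codimOneHausdorff_mono μ ?_
  rintro x ⟨h1, h2⟩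
  exact ⟨h1, lt_of_lt_of_le h2 (h x)⟩

lemma codimIntegral_avg {X : Type*} [MetricSpace X] [MeasurableSpace X] [BorelSpace X]
    (μ : Measure X) (A : Set X) (hA : MeasurableSet A) (hfin : codimOneHausdorff μ A ≠ ⊤)
    {f g : X → ℝ≥0∞} (hf : Measurable f) (hg : Measurable g)
    (h1 : 1 ≤ codimIntegral μ A f) (h2 : 1 ≤ codimIntegral μ A g) :
    1 ≤ codimIntegral μ A (fun x => (f x + g x) / 2) := by
  have hgood : ∀ δ : ℝ, 0 < δ → codimGauge μ δ ∅ = 0 := by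
    by_contra! hcon
    obtain ⟨δ, hδ, hne⟩ := hcon
    exact hfin (codimOneHausdorff_bad μ δ hδ hne A)
  obtain ⟨ν, hν⟩ := codimOneHausdorff_good μ hgood
  have hf' : IsFiniteMeasure (ν.restrict A) := by
    refine ⟨?_⟩
    rw [Measure.restrict_apply_univ, hν A hA]
    exact hfin.lt_top
  have key : ∀ u : X → ℝ≥0∞, Measurable u →
      codimIntegral μ A u = ∫⁻ x, u x ∂(ν.restrict A) := by
    intro u hu
    rw [← lintegral_layer_cake _ u hu]
    refine lintegral_congr fun s => ?_
    have hms : MeasurableSet {x | ENNReal.ofReal s < u x} := measurableSet_lt measurable_const hu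
    rw [Measure.restrict_apply hms, inter_comm, ← hν _ (hms.inter hA)]
  rw [key _ hf] at h1
  rw [key _ hg] at h2
  rw [key (fun x => (f x + g x) / 2) ((hf.add hg).div_const 2)]
  simp only [div_eq_mul_inv]
  rw [lintegral_mul_const _ (show Measurable fun x => f x + g x from hf.add hg),
    lintegral_add_left hf]
  calc (1 : ℝ≥0∞) = (1 + 1) * 2⁻¹ := by
        rw [one_add_one_eq_two, ENNReal.mul_inv_cancel two_ne_zero ENNReal.ofNat_ne_top]
    _ ≤ _ := by gcongr

/-! ### Ziemer's lemma for increasing families -/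

/-- Abstract modulus associated to a functional. -/
noncomputable def absMod {X ι : Type*} [MeasurableSpace X] (μ : Measure X) (q : ℝ)
    (I : ι → (X → ℝ≥0∞) → ℝ≥0∞) (T : Set ι) : ℝ≥0∞ :=
  ⨅ (ρ : X → ℝ≥0∞) (_ : Measurable ρ ∧ ∀ S ∈ T, 1 ≤ I S ρ), ∫⁻ x, ρ x ^ q ∂μ

lemma absMod_le {X ι : Type*} [MeasurableSpace X] (μ : Measure X) (q : ℝ)
    (I : ι → (X → ℝ≥0∞) → ℝ≥0∞) (T : Set ι) {ρ : X → ℝ≥0∞} (hρ : Measurable ρ)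
    (h : ∀ S ∈ T, 1 ≤ I S ρ) : absMod μ q I T ≤ ∫⁻ x, ρ x ^ q ∂μ :=
  iInf₂_le ρ ⟨hρ, h⟩

lemma absMod_mono {X ι : Type*} [MeasurableSpace X] (μ : Measure X) (q : ℝ)
    (I : ι → (X → ℝ≥0∞) → ℝ≥0∞) {T T' : Set ι} (h : T ⊆ T') :
    absMod μ q I T ≤ absMod μ q I T' :=
  le_iInf₂ fun _ hρ => absMod_le μ q I T hρ.1 fun S hS => hρ.2 S (h hS)

lemma near_min_close {X ι : Type*} [MeasurableSpace X] (μ : Measure X) (q : ℝ) (hq : 1 < q)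
    (I : ι → (X → ℝ≥0∞) → ℝ≥0∞) (U : Set ι)
    (havg : ∀ S ∈ U, ∀ f g : X → ℝ≥0∞, Measurable f → Measurable g → 1 ≤ I S f → 1 ≤ I S g →
      1 ≤ I S (fun x => (f x + g x) / 2))
    (m : ℝ≥0) (η : ℝ≥0) (hη : 0 < η) :
    ∃ e : ℝ≥0, 0 < e ∧ ∀ T ⊆ U, (m : ℝ≥0∞) ≤ absMod μ q I T + e →
      ∀ f g : X → ℝ≥0∞, Measurable f → Measurable g → (∀ S ∈ T, 1 ≤ I S f) →
      (∀ S ∈ T, 1 ≤ I S g) → ∫⁻ x, f x ^ q ∂μ ≤ m + e → ∫⁻ x, g x ^ q ∂μ ≤ m + e →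
      ∫⁻ x, (g x - f x) ^ q ∂μ ≤ η := by
  have hε : 0 < η / (4 * (m + 1)) := by positivity
  set ε : ℝ≥0 := η / (4 * (m + 1)) with hεdef
  obtain ⟨C, hC⟩ := unif_conv_ennreal q hq ε hε
  have he0 : 0 < min 1 (η / (4 * (C + 1))) := lt_min one_pos (by positivity)
  set e : ℝ≥0 := min 1 (η / (4 * (C + 1))) with hedef
  refine ⟨e, he0, fun T hT hm f g hf hg hfT hgT hfm hgm => ?_⟩
  have hP : absMod μ q I T ≤ ∫⁻ x, ((f x + g x) / 2) ^ q ∂μ :=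
    absMod_le μ q I T ((hf.add hg).div_const 2)
      fun S hS => havg S (hT hS) f g hf hg (hfT S hS) (hgT S hS)
  set D := ∫⁻ x, (g x - f x) ^ q ∂μ with hD
  have h1 : D + C * ∫⁻ x, ((f x + g x) / 2) ^ q ∂μ ≤
      (ε + C / 2) * (∫⁻ x, f x ^ q ∂μ + ∫⁻ x, g x ^ q ∂μ) := by
    have mm : Measurable fun x => ((f x + g x) / 2) ^ q :=
      ((hf.add hg).div_const 2).pow_const q
    have ms : Measurable fun x => (g x - f x) ^ q := (hg.sub hf).pow_const q
    rw [hD, ← lintegral_const_mul _ mm, ← lintegral_add_left ms,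
      ← lintegral_add_left (hf.pow_const q),
      ← lintegral_const_mul _ (show Measurable fun x => f x ^ q + g x ^ q from
        (hf.pow_const q).add (hg.pow_const q))]
    exact lintegral_mono fun x => hC (f x) (g x)
  have h2 : D + C * m ≤ ((ε + C / 2) * ((m + e) + (m + e)) + C * e : ℝ≥0) := by
    push_cast
    calc D + C * m ≤ D + C * ((∫⁻ x, ((f x + g x) / 2) ^ q ∂μ) + e) := by
          gcongr; exact hm.trans (by gcongr)
      _ = (D + C * ∫⁻ x, ((f x + g x) / 2) ^ q ∂μ) + C * e := by ring
      _ ≤ (ε + C / 2) * (∫⁻ x, f x ^ q ∂μ + ∫⁻ x, g x ^ q ∂μ) + C * e := by gcongr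
      _ ≤ _ := by
        gcongr
  have hDfin : D ≠ ⊤ := by
    have := ne_top_of_le_ne_top ENNReal.coe_ne_top h2
    exact (ENNReal.add_ne_top.1 this).1
  lift D to ℝ≥0 using hDfin with d hd
  rw [← ENNReal.coe_mul, ← ENNReal.coe_add, ENNReal.coe_le_coe, ← NNReal.coe_le_coe] at h2
  rw [ENNReal.coe_le_coe, ← NNReal.coe_le_coe]
  push_cast at h2
  have hεr : (ε : ℝ) * (4 * (m + 1)) = η := by
    rw [hεdef]; push_cast; field_simp
  have her : (e : ℝ) * (4 * (C + 1)) ≤ η := by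
    have : e ≤ η / (4 * (C + 1)) := min_le_right _ _
    rw [le_div_iff₀ (by positivity)] at this
    exact_mod_cast this
  have he1 : (e : ℝ) ≤ 1 := by exact_mod_cast (min_le_left 1 _ : e ≤ 1)
  have hεnn : (0 : ℝ) ≤ ε := ε.2
  have henn : (0 : ℝ) ≤ e := e.2
  have hη0 : (0 : ℝ) < η := hη
  nlinarith [mul_le_mul_of_nonneg_left he1 hεnn]

lemma ziemer {X ι : Type*} [MeasurableSpace X] (μ : Measure X) (q : ℝ) (hq : 1 < q)
    (I : ι → (X → ℝ≥0∞) → ℝ≥0∞) (T : ℕ → Set ι) (hT : Monotone T)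
    (hmono : ∀ S, ∀ f g : X → ℝ≥0∞, (∀ x, f x ≤ g x) → I S f ≤ I S g)
    (havg : ∀ S ∈ ⋃ n, T n, ∀ f g : X → ℝ≥0∞, Measurable f → Measurable g →
      1 ≤ I S f → 1 ≤ I S g → 1 ≤ I S (fun x => (f x + g x) / 2)) :
    Tendsto (fun n => absMod μ q I (T n)) atTop (𝓝 (absMod μ q I (⋃ n, T n))) := by
  have hq0 : 0 < q := by linarith
  have hMm : Monotone fun n => absMod μ q I (T n) := fun a b hab => absMod_mono μ q I (hT hab)
  have hlim := tendsto_atTop_iSup hMm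
  suffices hs : absMod μ q I (⋃ n, T n) = ⨆ n, absMod μ q I (T n) by rw [hs]; exact hlim
  refine le_antisymm ?_ (iSup_le fun n => absMod_mono μ q I (subset_iUnion T n))
  by_cases htop : (⨆ n, absMod μ q I (T n)) = ⊤
  · rw [htop]; exact le_top
  set M := ⨆ n, absMod μ q I (T n) with hM
  lift M to ℝ≥0 using htop with m hm
  have hle : ∀ n, absMod μ q I (T n) ≤ m := fun n => by rw [hM]; exact le_iSup (fun n => absMod μ q I (T n)) n
  -- near minimizers
  have hex : ∀ n : ℕ, ∃ ρ : X → ℝ≥0∞, Measurable ρ ∧ (∀ S ∈ T n, 1 ≤ I S ρ) ∧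
      ∫⁻ x, ρ x ^ q ∂μ ≤ m + ((n : ℝ≥0∞) + 1)⁻¹ := by
    intro n
    have hlt : absMod μ q I (T n) < m + ((n : ℝ≥0∞) + 1)⁻¹ :=
      (hle n).trans_lt (ENNReal.lt_add_right ENNReal.coe_ne_top
        (ENNReal.inv_ne_zero.2 (by finiteness)))
    unfold absMod at hlt
    simp only [iInf_lt_iff] at hlt
    obtain ⟨ρ, ⟨h1, h2⟩, h3⟩ := hlt
    exact ⟨ρ, h1, h2, h3.le⟩
  choose ρ hρm hρa hρi using hex
  have hsmall : ∀ e : ℝ≥0, 0 < e → ∀ᶠ n : ℕ in atTop, ∀ j ≥ n,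
      ∫⁻ x, ρ j x ^ q ∂μ ≤ m + e := by
    intro e he
    obtain ⟨N, hN⟩ := ENNReal.exists_inv_nat_lt (ENNReal.coe_pos.2 he).ne'
    filter_upwards [eventually_ge_atTop N] with n hn j hj
    refine (hρi j).trans ?_
    gcongr
    refine le_trans ?_ hN.le
    rw [ENNReal.inv_le_inv]
    have : N ≤ j + 1 := by omega
    exact_mod_cast this
  have hcauchy : ∀ η : ℝ≥0, 0 < η → ∀ᶠ n : ℕ in atTop, ∀ j ≥ n,
      ∫⁻ x, (ρ j x - ρ n x) ^ q ∂μ ≤ η := by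
    intro η hη
    obtain ⟨e, he, h⟩ := near_min_close μ q hq I (⋃ n, T n) havg m η hη
    have hev : ∀ᶠ n in atTop, (m : ℝ≥0∞) ≤ absMod μ q I (T n) + e := by
      have ht : Tendsto (fun n => absMod μ q I (T n) + e) atTop (𝓝 ((m : ℝ≥0∞) + e)) := by
        exact hlim.add tendsto_const_nhds
      have := ht.eventually_const_lt
        (ENNReal.lt_add_right ENNReal.coe_ne_top (ENNReal.coe_pos.2 he).ne' : (m : ℝ≥0∞) < m + e)
      exact this.mono fun _ h => h.le
    filter_upwards [hev, hsmall e he] with n hn hs j hj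
    exact h (T n) (subset_iUnion T n) hn (ρ n) (ρ j) (hρm n) (hρm j) (hρa n)
      (fun S hS => hρa j S (hT hj hS)) (hs n le_rfl) (hs j hj)
  have hmain : ∀ ε : ℝ≥0, 0 < ε →
      absMod μ q I (⋃ n, T n) ≤ (((m : ℝ≥0∞) + ε) ^ (1 / q) + ε) ^ q := by
    intro ε hε
    obtain ⟨φ, hφ, hP⟩ := extraction_forall_of_eventually
      (P := fun k n => (∀ j ≥ n, ∫⁻ x, (ρ j x - ρ n x) ^ q ∂μ ≤
        (((ε / 2 / 2 ^ k) ^ q : ℝ≥0) : ℝ≥0∞)) ∧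
        ∀ j ≥ n, ∫⁻ x, ρ j x ^ q ∂μ ≤ m + ε)
      (fun k => (hcauchy _ (NNReal.rpow_pos (by positivity))).and (hsmall ε hε))
    let g : ℕ → X → ℝ≥0∞ := fun n => Nat.rec (ρ (φ 0))
      (fun k h => h + fun x => ρ (φ (k + 1)) x - ρ (φ k) x) n
    have hg0 : g 0 = ρ (φ 0) := rfl
    have hgs : ∀ k, g (k + 1) = g k + fun x => ρ (φ (k + 1)) x - ρ (φ k) x := fun k => rfl
    have hgm : ∀ k, Measurable (g k) := by
      intro k
      induction k with
      | zero => exact hρm _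
      | succ k ih => rw [hgs]; exact ih.add ((hρm _).sub (hρm _))
    have hgρ : ∀ k x, ρ (φ k) x ≤ g k x := by
      intro k x
      induction k with
      | zero => exact le_rfl
      | succ k ih =>
        rw [hgs, Pi.add_apply]
        exact le_add_tsub.trans (by gcongr)
    have hgmono : Monotone g := monotone_nat_of_le_succ fun k => by
      rw [hgs]; exact le_self_add
    have hgn : ∀ k, (∫⁻ x, g k x ^ q ∂μ) ^ (1 / q) ≤
        ((m : ℝ≥0∞) + ε) ^ (1 / q) + ((ε - ε / 2 ^ k : ℝ≥0) : ℝ≥0∞) := by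
      intro k
      induction k with
      | zero =>
        rw [hg0]
        refine le_trans ?_ le_self_add
        exact ENNReal.rpow_le_rpow ((hP 0).2 _ le_rfl) (by positivity)
      | succ k ih =>
        rw [hgs]
        refine (ENNReal.lintegral_Lp_add_le (hgm k).aemeasurable
          ((hρm _).sub (hρm _)).aemeasurable hq.le).trans ?_
        have h1 : (∫⁻ x, (ρ (φ (k + 1)) x - ρ (φ k) x) ^ q ∂μ) ^ (1 / q) ≤
            ((ε / 2 / 2 ^ k : ℝ≥0) : ℝ≥0∞) := by
          refine (ENNReal.rpow_le_rpow ((hP k).1 _ (hφ.monotone (Nat.le_succ k)))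
            (by positivity)).trans ?_
          rw [ENNReal.coe_rpow_of_nonneg _ hq0.le, ← ENNReal.rpow_mul,
            mul_one_div_cancel hq0.ne', ENNReal.rpow_one]
        refine (add_le_add ih h1).trans ?_
        rw [add_assoc]
        refine add_le_add le_rfl ?_
        rw [← ENNReal.coe_add, ENNReal.coe_le_coe, ← NNReal.coe_le_coe]
        have a1 : ε / 2 ^ k ≤ ε := div_le_self zero_le (one_le_pow₀ one_le_two)
        have a2 : ε / 2 ^ (k + 1) ≤ ε := div_le_self zero_le (one_le_pow₀ one_le_two)
        rw [NNReal.coe_add, NNReal.coe_sub a1, NNReal.coe_sub a2]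
        push_cast
        rw [pow_succ]
        apply le_of_eq
        field_simp
        ring
    have hgB : ∀ k, ∫⁻ x, g k x ^ q ∂μ ≤ (((m : ℝ≥0∞) + ε) ^ (1 / q) + ε) ^ q := by
      intro k
      have h1 : (∫⁻ x, g k x ^ q ∂μ) ^ (1 / q) ≤ ((m : ℝ≥0∞) + ε) ^ (1 / q) + ε :=
        (hgn k).trans (by gcongr; exact tsub_le_self)
      have h2 := ENNReal.rpow_le_rpow h1 hq0.le
      rwa [← ENNReal.rpow_mul, one_div_mul_cancel hq0.ne', ENNReal.rpow_one] at h2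
    have hadm : absMod μ q I (⋃ n, T n) ≤ ∫⁻ x, (⨆ k, g k x) ^ q ∂μ := by
      refine absMod_le μ q I _ (Measurable.iSup hgm) fun S hS => ?_
      obtain ⟨n, hn⟩ := mem_iUnion.1 hS
      refine (hρa (φ n) S (hT (hφ.id_le n) hn)).trans (hmono S _ _ fun x => ?_)
      exact (hgρ n x).trans (le_iSup (fun k => g k x) n)
    refine hadm.trans ?_
    have hsup : ∀ x, (⨆ k, g k x) ^ q = ⨆ k, g k x ^ q := fun x =>
      (ENNReal.orderIsoRpow q hq0).map_iSup fun k => g k x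
    simp_rw [hsup]
    rw [lintegral_iSup (fun k => (hgm k).pow_const q)
      (fun a b hab x => ENNReal.rpow_le_rpow (hgmono hab x) hq0.le)]
    exact iSup_le hgB
  have hc : Continuous fun ε : ℝ≥0 => (((m : ℝ≥0∞) + ε) ^ (1 / q) + ε) ^ q := by
    have c0 : Continuous fun ε : ℝ≥0 => (ε : ℝ≥0∞) := ENNReal.continuous_coe
    exact ENNReal.continuous_rpow_const.comp
      ((ENNReal.continuous_rpow_const.comp (continuous_const.add c0)).add c0)
  have ht : Tendsto (fun ε : ℝ≥0 => (((m : ℝ≥0∞) + ε) ^ (1 / q) + ε) ^ q) (𝓝[>] 0)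
      (𝓝 (m : ℝ≥0∞)) := by
    have := (hc.tendsto 0).mono_left (nhdsWithin_le_nhds (s := Ioi 0))
    simpa [← ENNReal.rpow_mul, inv_mul_cancel₀ hq0.ne'] using this
  exact ge_of_tendsto ht (eventually_nhdsWithin_of_forall fun ε hε => hmain ε hε)

/-- The moduli of the truncated surface families converge to the modulus of the full family
(equation (5.2) of Lohvansuu–Rajala). -/
theorem surface_modulus_limit {X : Type*} [MetricSpace X] [MeasurableSpace X] [BorelSpace X]
    [CompleteSpace X] (μ : Measure X) (hBR : BorelRegular μ)
    (Cμ : ℝ) (hCμ : 1 < Cμ) (hD : IsDoublingWith μ Cμ)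
    (CP lP : ℝ) (hCP : 1 ≤ CP) (hlP : 1 ≤ lP) (hPI : WeakPoincare μ 1 CP lP)
    (G E F : Set X)
    (hG : IsDomainWithCompactClosure G) (hE : IsNondegContinuum E) (hF : IsNondegContinuum F)
    (hEG : E ⊆ G) (hFG : F ⊆ G) (hEF : Disjoint E F)
    (q : ℝ) (hq : 1 < q) :
    Filter.Tendsto
      (fun j : ℕ => surfModulus μ q
        {S ∈ surfaceSets μ E F G | ∀ x ∈ S, ∀ y ∈ E ∪ F, 1 / (j : ℝ) < dist x y} G)
      Filter.atTop (𝓝 (surfModulus μ q (surfaceSets μ E F G) G)) := by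
  set I : Set X → (X → ℝ≥0∞) → ℝ≥0∞ := fun S ρ => codimIntegral μ (S ∩ G) ρ with hI
  set T : ℕ → Set (Set X) := fun j =>
    {S ∈ surfaceSets μ E F G | ∀ x ∈ S, ∀ y ∈ E ∪ F, 1 / ((j + 1 : ℕ) : ℝ) < dist x y} with hTd
  have hT : Monotone T := by
    intro a b hab S hS
    refine ⟨hS.1, fun x hx y hy => lt_of_le_of_lt ?_ (hS.2 x hx y hy)⟩
    apply one_div_le_one_div_of_le
    · positivity
    · exact_mod_cast Nat.succ_le_succ hab
  have hU : ⋃ n, T n = surfaceSets μ E F G := by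
    apply Subset.antisymm
    · exact iUnion_subset fun n S hS => hS.1
    · intro S hS
      obtain ⟨hSc, -, -, x, hx, y, hy, hEx, hFy, -⟩ := id hS
      have hdisj : Disjoint S (E ∪ F) := by
        rw [Set.disjoint_left]
        rintro z hz (h | h)
        · exact (connectedComponentIn_subset _ _ (hEx h)).2 hz
        · exact (connectedComponentIn_subset _ _ (hFy h)).2 hz
      obtain ⟨r, hr0, hr⟩ := Metric.exists_pos_forall_lt_edist hSc
        (hE.1.union hF.1).isClosed hdisj
      obtain ⟨n, hn⟩ := exists_nat_one_div_lt (NNReal.coe_pos.2 hr0)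
      refine mem_iUnion.2 ⟨n, hS, fun a ha b hb => ?_⟩
      have h1 := hr a ha b hb
      rw [edist_nndist, ENNReal.coe_lt_coe, ← NNReal.coe_lt_coe, coe_nndist] at h1
      push_cast
      exact hn.trans h1
  have hz := ziemer μ q hq I T hT (fun S f g h => codimIntegral_mono μ _ h)
    (by
      rw [hU]
      intro S hS f g hf hg h1 h2
      exact codimIntegral_avg μ (S ∩ G) (hS.1.isClosed.measurableSet.inter hG.1.measurableSet)
        hS.2.2.1 hf hg h1 h2)
  rw [hU] at hz
  rw [← tendsto_add_atTop_iff_nat 1]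
  exact hz
end

section
/- For every ε ∈ (0, 1) there exist a complete geodesic metric measure space (X, d, μ) with μ Borel-regular that is Ahlfors 3-regular and supports a weak (1+ε)-Poincaré inequality, a domain G ⊂ X with compact closure, and disjoint continua E, F ⊂ G each containing at least two points, such that 0 < mod_3 Γ(E, F; G) < ∞ while the family Γ*(E, F; G) admits no admissible function, so that mod_{3/2} Γ*(E, F; G) = ∞. In particular, the duality upper bound (mod_3 Γ)^{1/3} (mod_{3/2} Γ*)^{2/3} ≤ C fails for every finite C, and X does not support a weak 1-Poincaré inequality. -/
open MeasureTheory Metric Set ENNReal NNReal Filter Topology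

namespace DF

abbrev V := Fin 3 → ℝ

lemma lintegral_affine (k' : V) {τ : ℝ} (hτ : 0 < τ) (h : V → ℝ≥0∞) (hm : Measurable h) :
    ∫⁻ x, h (k' + τ • (x - k')) = ENNReal.ofReal ((τ ^ 3)⁻¹) * ∫⁻ z, h z := by
  have e : ∀ x : V, k' + τ • (x - k') = τ • x + (k' - τ • k') := by
    intro x; rw [smul_sub]; abel
  simp_rw [e]
  have h1 : ∫⁻ x : V, h (τ • x + (k' - τ • k'))
      = ∫⁻ y, h (y + (k' - τ • k')) ∂(Measure.map (τ • ·) (volume : Measure V)) := by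
    rw [lintegral_map (by fun_prop) (by fun_prop)]
  rw [h1, Measure.map_addHaar_smul volume hτ.ne', lintegral_smul_measure,
    lintegral_add_right_eq_self]
  simp [abs_of_pos hτ]

lemma key_tau {R : ℝ} {k : V} {τ : ℝ} (hτ : 0 < τ) (hτ1 : τ ≤ 1)
    (ν : Measure V) [IsProbabilityMeasure ν] (hsupp : ν (ball k R)ᶜ = 0) (S : ℝ≥0∞)
    (hfro : ∀ z, ν (closedBall z (2 * R * τ)) ≤ S) (g : V → ℝ≥0∞) (hg : Measurable g) :
    ∫⁻ k', ∫⁻ x in ball k R, g (k' + τ • (x - k')) ∂volume ∂ν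
      ≤ ENNReal.ofReal ((τ ^ 3)⁻¹) * (S * ∫⁻ z in ball k R, g z) := by
  have hae : ∀ᵐ k' ∂ν, k' ∈ ball k R := by
    rw [ae_iff]; exact hsupp
  have hset : MeasurableSet {q : V × V | dist q.2 q.1 ≤ 2 * R * τ} :=
    measurableSet_le (by fun_prop) (by fun_prop)
  let h : V → V → ℝ≥0∞ := fun k' z =>
    (ball k R).indicator g z * ({q : V × V | dist q.2 q.1 ≤ 2 * R * τ}).indicator 1 (k', z)
  have hmeas : Measurable (Function.uncurry h) := by
    refine Measurable.mul ?_ ?_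
    · exact (hg.indicator measurableSet_ball).comp measurable_snd
    · exact (measurable_one.indicator hset)
  calc ∫⁻ k', ∫⁻ x in ball k R, g (k' + τ • (x - k')) ∂volume ∂ν
      ≤ ∫⁻ k', ENNReal.ofReal ((τ ^ 3)⁻¹) * ∫⁻ z, h k' z ∂volume ∂ν := by
        apply lintegral_mono_ae
        filter_upwards [hae] with k' hk'
        rw [← lintegral_affine k' hτ (h k') (hmeas.of_uncurry_left)]
        refine (setLIntegral_mono' measurableSet_ball ?_).trans (setLIntegral_le_lintegral (ball k R) _)
        intro x hx
        have h1 : k' + τ • (x - k') ∈ ball k R := by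
          have := (convex_ball k R) hk' hx (sub_nonneg.2 hτ1) hτ.le (by ring)
          convert this using 1
          rw [smul_sub, sub_smul, one_smul]; abel
        have h2 : dist (k' + τ • (x - k')) k' ≤ 2 * R * τ := by
          rw [dist_eq_norm, add_sub_cancel_left, norm_smul, Real.norm_of_nonneg hτ.le,
            ← dist_eq_norm]
          have : dist x k' ≤ 2 * R := by
            have := dist_triangle_right x k' k
            rw [mem_ball] at hx hk'
            linarith
          nlinarith
        simp only [h]
        rw [indicator_of_mem h1, indicator_of_mem (by exact h2)]
        simp
    _ = ENNReal.ofReal ((τ ^ 3)⁻¹) * ∫⁻ z, ∫⁻ k', h k' z ∂ν := by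
        rw [lintegral_const_mul _ (hmeas.lintegral_prod_right), lintegral_lintegral_swap hmeas.aemeasurable]
    _ ≤ _ := by
        gcongr
        rw [← lintegral_indicator measurableSet_ball, ← lintegral_const_mul _ (hg.indicator measurableSet_ball)]
        apply lintegral_mono
        intro z
        simp only [h]
        rw [lintegral_const_mul]
        · rw [mul_comm]
          gcongr
          have : (fun k' : V => ({q : V × V | dist q.2 q.1 ≤ 2 * R * τ}).indicator (1 : V × V → ℝ≥0∞) (k', z))
            = (closedBall z (2 * R * τ)).indicator 1 := by
            ext k'
            by_cases hk : dist z k' ≤ 2 * R * τ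
            · rw [indicator_of_mem (by exact hk), indicator_of_mem (by rwa [mem_closedBall']) ]; rfl
            · rw [indicator_of_notMem (by exact hk), indicator_of_notMem (by rwa [mem_closedBall'])]
          rw [this, lintegral_indicator_one measurableSet_closedBall]
          exact hfro z
        · exact (measurable_one.indicator hset).comp (measurable_id.prodMk measurable_const)

lemma lintegral_le_holder {α : Type*} [MeasurableSpace α] (m : Measure α) {p : ℝ} (hp : 1 < p)
    (f : α → ℝ≥0∞) (hf : Measurable f) :
    ∫⁻ a, f a ∂m ≤ (∫⁻ a, f a ^ p ∂m) ^ (1 / p) * m univ ^ (1 - 1 / p) := by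
  have hc := Real.HolderConjugate.conjExponent hp
  have := ENNReal.lintegral_mul_le_Lp_mul_Lq m hc hf.aemeasurable (aemeasurable_const (b := (1:ℝ≥0∞)))
  simp only [Pi.mul_apply, mul_one, ENNReal.one_rpow, lintegral_const, one_mul] at this
  refine this.trans_eq ?_
  congr 2
  have := hc.inv_add_inv_eq_one
  rw [one_div, one_div]; linarith

lemma seg_bound {p t C : ℝ} (hp : 1 < p) (htp : 3 - p < t) :
    ∃ D : ℝ≥0∞, D ≠ ⊤ ∧ ∀ (R : ℝ) (k : V) (ν : Measure V) (_ : IsProbabilityMeasure ν),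
      0 < R → ν (ball k R)ᶜ = 0 →
      (∀ z τ, 0 < τ → τ ≤ 1 → ν (closedBall z (2 * R * τ)) ≤ ENNReal.ofReal (C * τ ^ t)) →
      ∀ w : V → ℝ≥0∞, Measurable w →
      ∫⁻ k', ∫⁻ x in ball k R, ∫⁻ τ in Ioc (0:ℝ) 1, w (k' + τ • (x - k')) ∂volume ∂volume ∂ν
        ≤ D * ((∫⁻ z in ball k R, w z ^ p) ^ (1 / p) * volume (ball k R) ^ (1 - 1 / p)) := by
  have hp0 : 0 < p := by linarith
  refine ⟨ENNReal.ofReal C ^ (1 / p) * ∫⁻ τ in Ioc (0:ℝ) 1, ENNReal.ofReal (τ ^ ((t - 3) / p)),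
    ?_, ?_⟩
  · refine ENNReal.mul_ne_top (ENNReal.rpow_ne_top_of_nonneg (by positivity) ENNReal.ofReal_ne_top) ?_
    have hi : IntervalIntegrable (fun x : ℝ => x ^ ((t - 3) / p)) volume 0 1 := by
      apply intervalIntegral.intervalIntegrable_rpow'
      rw [lt_div_iff₀ hp0]; linarith
    rw [intervalIntegrable_iff_integrableOn_Ioc_of_le zero_le_one] at hi
    exact hi.lintegral_lt_top.ne
  intro R k ν _ hR hsupp hfro w hw
  set W := (∫⁻ z in ball k R, w z ^ p) ^ (1 / p) * volume (ball k R) ^ (1 - 1 / p)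
  have hmeas3 : Measurable (fun q : (V × V) × ℝ => w (q.1.1 + q.2 • (q.1.2 - q.1.1))) :=
    hw.comp (by fun_prop)
  have step1 : ∫⁻ k', ∫⁻ x in ball k R, ∫⁻ τ in Ioc (0:ℝ) 1, w (k' + τ • (x - k')) ∂volume ∂volume ∂ν
     = ∫⁻ τ in Ioc (0:ℝ) 1, ∫⁻ q, w (q.1 + τ • (q.2 - q.1)) ∂(ν.prod (volume.restrict (ball k R))) := by
    rw [lintegral_lintegral_swap (μ := volume.restrict (Ioc (0:ℝ) 1))]
    · rw [lintegral_prod]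
      exact (hmeas3.lintegral_prod_right').aemeasurable
    · exact (hmeas3.comp measurable_swap).aemeasurable
  rw [step1, mul_assoc, ← lintegral_mul_const _ (by fun_prop), ← lintegral_const_mul _ (by fun_prop)]
  apply setLIntegral_mono' measurableSet_Ioc
  intro τ hτ
  have hm2 : Measurable fun q : V × V => w (q.1 + τ • (q.2 - q.1)) := hw.comp (by fun_prop)
  refine (lintegral_le_holder _ hp _ hm2).trans ?_
  have hm2' : Measurable fun q : V × V => w (q.1 + τ • (q.2 - q.1)) ^ p := hm2.pow_const _
  rw [lintegral_prod _ hm2'.aemeasurable]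
  have := key_tau (k := k) hτ.1 hτ.2 ν hsupp _ (fun z => hfro z τ hτ.1 hτ.2) (fun x => w x ^ p)
    (hw.pow_const _)
  have hu : (ν.prod (volume.restrict (ball k R))) univ = volume (ball k R) := by
    rw [← univ_prod_univ, Measure.prod_prod]; simp
  rw [hu]
  calc _ ≤ (ENNReal.ofReal ((τ ^ 3)⁻¹) * (ENNReal.ofReal (C * τ ^ t) * ∫⁻ z in ball k R, w z ^ p)) ^ (1 / p)
        * volume (ball k R) ^ (1 - 1 / p) := by
        gcongr
    _ = _ := by
      have hτ0 := hτ.1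
      rw [ENNReal.ofReal_mul' (by positivity), ENNReal.mul_rpow_of_nonneg _ _ (by positivity),
        ENNReal.mul_rpow_of_nonneg _ _ (by positivity),
        ENNReal.mul_rpow_of_nonneg _ _ (by positivity)]
      have e : ENNReal.ofReal (τ ^ ((t - 3) / p)) = ENNReal.ofReal ((τ ^ 3)⁻¹) ^ (1/p) *
          ENNReal.ofReal (τ ^ t) ^ (1/p) := by
        rw [ENNReal.ofReal_rpow_of_nonneg (by positivity) (by positivity),
          ENNReal.ofReal_rpow_of_nonneg (by positivity) (by positivity),
          ← ENNReal.ofReal_mul (by positivity)]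
        congr 1
        rw [← Real.mul_rpow (by positivity) (by positivity), ← Real.rpow_natCast,
          ← Real.rpow_neg hτ0.le, ← Real.rpow_add hτ0, ← Real.rpow_mul hτ0.le]
        congr 1
        push_cast; ring
      rw [e]
      simp only [W]
      ring
end DF

namespace DF

abbrev Dig := Fin 3 → Bool

/-- Digit vector. -/
def dv (d : Dig) : V := fun i => if d i then 1 else 0

/-- The coding map of the self-similar Cantor dust of ratio `l`. -/
noncomputable def Phi (l : ℝ) (s : ℕ → Dig) : V := fun i => ∑' n, (1 - l) * l ^ n * dv (s n) i

lemma dv_nonneg (d : Dig) (i : Fin 3) : 0 ≤ dv d i := by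
  unfold dv; split_ifs <;> norm_num
lemma dv_le_one (d : Dig) (i : Fin 3) : dv d i ≤ 1 := by
  unfold dv; split_ifs <;> norm_num

section
variable {l : ℝ} (h0 : 0 < l) (h1 : l < 1 / 2)
include h0 h1

lemma summable_bd : Summable (fun n : ℕ => (1 - l) * l ^ n) :=
  (summable_geometric_of_lt_one h0.le (by linarith)).mul_left _

lemma Phi_summable (s : ℕ → Dig) (i : Fin 3) : Summable (fun n => (1 - l) * l ^ n * dv (s n) i) := by
  refine Summable.of_nonneg_of_le (fun n => ?_) (fun n => ?_) (summable_bd h0 h1)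
  · have := dv_nonneg (s n) i
    have : 0 ≤ 1 - l := by linarith
    positivity
  · have h3 : 0 ≤ 1 - l := by linarith
    exact mul_le_of_le_one_right (by positivity) (dv_le_one _ _)

lemma Phi_nonneg (s : ℕ → Dig) (i : Fin 3) : 0 ≤ Phi l s i := by
  refine tsum_nonneg fun n => ?_
  have := dv_nonneg (s n) i
  have : 0 ≤ 1 - l := by linarith
  positivity

lemma Phi_le_one (s : ℕ → Dig) (i : Fin 3) : Phi l s i ≤ 1 := by
  have h3 : 0 ≤ 1 - l := by linarith
  have : Phi l s i ≤ ∑' n : ℕ, (1 - l) * l ^ n := by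
    refine (Phi_summable h0 h1 s i).tsum_le_tsum (fun n => ?_) (summable_bd h0 h1)
    exact mul_le_of_le_one_right (by positivity) (dv_le_one _ _)
  rw [_root_.tsum_mul_left, tsum_geometric_of_lt_one h0.le (by linarith)] at this
  rwa [mul_inv_cancel₀ (by linarith)] at this

lemma Phi_rec (s : ℕ → Dig) : Phi l s = (1 - l) • dv (s 0) + l • Phi l (fun n => s (n + 1)) := by
  ext i
  have := (Phi_summable h0 h1 s i).tsum_eq_zero_add
  simp only [Phi, Pi.add_apply, Pi.smul_apply, smul_eq_mul]
  rw [this, ← _root_.tsum_mul_left]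
  congr 1
  · simp
  · congr 1; ext n; ring

lemma Phi_continuous : Continuous (Phi l) := by
  refine continuous_pi fun i => ?_
  refine continuous_tsum (u := fun n : ℕ => (1 - l) * l ^ n) (fun n => ?_) (summable_bd h0 h1) ?_
  · refine continuous_const.mul ?_
    have : Continuous (fun d : Dig => dv d i) := continuous_of_discreteTopology
    exact this.comp (continuous_apply n)
  · intro n s
    have h3 : 0 ≤ 1 - l := by linarith
    rw [Real.norm_of_nonneg (mul_nonneg (by positivity) (dv_nonneg _ _))]
    exact mul_le_of_le_one_right (by positivity) (dv_le_one _ _)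

lemma Phi_sep (m : ℕ) : ∀ s s' : ℕ → Dig, (∀ j < m, s j = s' j) → s m ≠ s' m →
    l ^ m * (1 - 2 * l) ≤ dist (Phi l s) (Phi l s') := by
  induction m with
  | zero =>
    intro s s' _ hne
    obtain ⟨i, hi⟩ := Function.ne_iff.1 hne
    refine le_trans ?_ (dist_le_pi_dist _ _ i)
    rw [Phi_rec h0 h1 s, Phi_rec h0 h1 s', Real.dist_eq]
    have a1 := Phi_nonneg h0 h1 (fun n => s (n + 1)) i
    have a2 := Phi_le_one h0 h1 (fun n => s (n + 1)) i
    have b1 := Phi_nonneg h0 h1 (fun n => s' (n + 1)) i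
    have b2 := Phi_le_one h0 h1 (fun n => s' (n + 1)) i
    simp only [Pi.add_apply, Pi.smul_apply, smul_eq_mul, dv, pow_zero, one_mul]
    generalize Phi l (fun n => s (n + 1)) i = x at *
    generalize Phi l (fun n => s' (n + 1)) i = y at *
    rcases hs : s 0 i <;> rcases hs' : s' 0 i <;> simp [hs, hs'] at hi ⊢
    · have := neg_le_abs (l * x - (1 - l + l * y)); nlinarith
    · have := le_abs_self (1 - l + l * x - l * y); nlinarith
  | succ m ih =>
    intro s s' hag hne
    have := ih (fun n => s (n + 1)) (fun n => s' (n + 1)) (fun j hj => hag _ (by omega)) hne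
    rw [Phi_rec h0 h1 s, Phi_rec h0 h1 s', hag 0 (by omega), dist_add_left, dist_smul₀,
      Real.norm_of_nonneg h0.le, pow_succ]
    nlinarith

end

/-- Uniform measure on digits. -/
noncomputable def unif : Measure Dig := (8 : ℝ≥0∞)⁻¹ • Measure.count

instance : IsProbabilityMeasure unif := ⟨by
  simp only [unif, Measure.smul_apply, Measure.count_univ, smul_eq_mul]
  have : ENat.card Dig = 8 := by
    rw [ENat.card_eq_coe_fintype_card]; simp
  rw [this]
  exact ENNReal.inv_mul_cancel (by norm_num) (by norm_num)⟩

lemma unif_singleton (d : Dig) : unif {d} = 8⁻¹ := by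
  simp [unif]

/-- Natural measure on the Cantor dust. -/
noncomputable def nu0 (l : ℝ) : Measure V :=
  Measure.map (Phi l) (Measure.infinitePi (fun _ : ℕ => unif))

section
variable {l : ℝ} (h0 : 0 < l) (h1 : l < 1 / 2)
include h0 h1

lemma nu0_prob : IsProbabilityMeasure (nu0 l) :=
  Measure.isProbabilityMeasure_map (Phi_continuous h0 h1).measurable.aemeasurable

lemma K0_compact : IsCompact (range (Phi l)) := isCompact_range (Phi_continuous h0 h1)

lemma nu0_supp : nu0 l (range (Phi l))ᶜ = 0 := by
  rw [nu0, Measure.map_apply (Phi_continuous h0 h1).measurable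
    (K0_compact h0 h1).isClosed.measurableSet.compl]
  simp

lemma nu0_frost {t : ℝ} (ht : 0 < t) (hlt : l ^ t = 1 / 8) (z : V) (r : ℝ) (hr : 0 < r) :
    nu0 l (closedBall z r) ≤ ENNReal.ofReal (8 * (2 * r / (1 - 2 * l)) ^ t) := by
  have hl2 : 0 < 1 - 2 * l := by linarith
  have := nu0_prob h0 h1
  set q := 2 * r / (1 - 2 * l) with hq
  have hq0 : 0 < q := by positivity
  by_cases hq1 : 1 ≤ q
  · refine (prob_le_one).trans ?_
    rw [← ENNReal.ofReal_one]
    have := Real.one_le_rpow hq1 ht.le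
    exact ENNReal.ofReal_le_ofReal (by linarith)
  push Not at hq1
  obtain ⟨n, hn1, hn2⟩ := exists_nat_pow_near_of_lt_one hq0 hq1.le h0 (by linarith)
  by_cases hemp : (Phi l ⁻¹' closedBall z r).Nonempty
  swap
  · rw [nu0, Measure.map_apply (Phi_continuous h0 h1).measurable measurableSet_closedBall,
      not_nonempty_iff_eq_empty.1 hemp]
    simp
  obtain ⟨s', hs'⟩ := hemp
  have hsub : Phi l ⁻¹' closedBall z r ⊆ Set.pi (Finset.range n : Set ℕ) (fun j => {s' j}) := by
    intro s hs
    by_contra hcon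
    simp only [Set.mem_pi, mem_singleton_iff, not_forall] at hcon
    classical
    have hex : ∃ j, s j ≠ s' j := by
      obtain ⟨j, _, hj⟩ := hcon; exact ⟨j, hj⟩
    obtain ⟨j, hj, hjn⟩ := hcon
    have hm := Nat.find_spec hex
    have hle : Nat.find hex ≤ j := Nat.find_min' hex hjn
    have hlt' : ∀ i < Nat.find hex, s i = s' i := fun i hi => by
      have := Nat.find_min hex hi; push Not at this; exact this
    have hsep := Phi_sep h0 h1 _ s s' hlt' hm
    have hd : dist (Phi l s) (Phi l s') ≤ 2 * r := by
      have := dist_triangle_right (Phi l s) (Phi l s') z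
      rw [mem_preimage, mem_closedBall] at hs hs'
      linarith
    have hjn' : j < n := by simpa using hj
    have : l ^ (n - 1) ≤ l ^ Nat.find hex := pow_le_pow_of_le_one h0.le (by linarith) (by omega)
    have h3 : l ^ n = l ^ (n - 1) * l := by rw [← pow_succ]; congr 1; omega
    have h4 : q * (1 - 2 * l) = 2 * r := by rw [hq]; field_simp
    have h5 : l ^ (n - 1) * l < l ^ (n - 1) := mul_lt_of_lt_one_right (by positivity) (by linarith)
    nlinarith
  calc nu0 l (closedBall z r) ≤ Measure.infinitePi (fun _ : ℕ => unif)
        (Set.pi (Finset.range n : Set ℕ) (fun j => {s' j})) := by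
        rw [nu0, Measure.map_apply (Phi_continuous h0 h1).measurable measurableSet_closedBall]
        exact measure_mono hsub
    _ = 8⁻¹ ^ n := by
        rw [Measure.infinitePi_pi _ (fun i _ => measurableSet_singleton _)]
        simp [unif_singleton]
    _ ≤ _ := by
        have e : (8⁻¹ : ℝ≥0∞) = ENNReal.ofReal (1 / 8) := by
          rw [one_div, ENNReal.ofReal_inv_of_pos (by norm_num)]; simp
        rw [e, ← ENNReal.ofReal_pow (by norm_num)]
        apply ENNReal.ofReal_le_ofReal
        have h6 : (l ^ (n + 1)) ^ t ≤ q ^ t := Real.rpow_le_rpow (by positivity) hn1.le ht.le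
        have h7 : (l ^ (n + 1)) ^ t = (1 / 8) ^ (n + 1) := by
          rw [← Real.rpow_natCast, ← Real.rpow_mul h0.le, mul_comm, Real.rpow_mul h0.le, hlt,
            Real.rpow_natCast]
        rw [h7, pow_succ] at h6
        linarith
end
end DF

namespace DF

section
variable {l : ℝ} (h0 : 0 < l) (h1 : l < 1 / 2)
include h0 h1

lemma Phi_cons (d : Dig) (s : ℕ → Dig) :
    (1 - l) • dv d + l • Phi l s ∈ range (Phi l) := by
  refine ⟨fun n => Nat.casesOn n d (fun m => s m), ?_⟩
  rw [Phi_rec h0 h1]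
  rfl

lemma piece (n : ℕ) : ∀ s : ℕ → Dig, ∃ b : V, (∃ y ∈ range (Phi l), Phi l s = b + l ^ n • y) ∧
    ∀ x ∈ range (Phi l), b + l ^ n • x ∈ range (Phi l) := by
  induction n with
  | zero => exact fun s => ⟨0, ⟨Phi l s, mem_range_self s, by simp⟩, by simp⟩
  | succ n ih =>
    intro s
    obtain ⟨b, ⟨y, hy, hyb⟩, hb⟩ := ih (fun n => s (n + 1))
    have key : ∀ x : V, (1 - l) • dv (s 0) + l • b + l ^ (n + 1) • x
        = (1 - l) • dv (s 0) + l • (b + l ^ n • x) := by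
      intro x; rw [smul_add, smul_smul, ← pow_succ', add_assoc]
    refine ⟨(1 - l) • dv (s 0) + l • b, ⟨y, hy, ?_⟩, fun x hx => ?_⟩
    · rw [key, ← hyb, ← Phi_rec h0 h1]
    · rw [key]
      obtain ⟨s', hs'⟩ := hb x hx
      rw [← hs']
      exact Phi_cons h0 h1 _ _

lemma K0_nonneg {x : V} (hx : x ∈ range (Phi l)) (i : Fin 3) : 0 ≤ x i := by
  obtain ⟨s, rfl⟩ := hx; exact Phi_nonneg h0 h1 s i

lemma K0_dist {x y : V} (hx : x ∈ range (Phi l)) (hy : y ∈ range (Phi l)) : dist x y ≤ 1 := by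
  obtain ⟨s, rfl⟩ := hx
  obtain ⟨s', rfl⟩ := hy
  rw [dist_pi_le_iff zero_le_one]
  intro i
  rw [Real.dist_eq, abs_le]
  have a1 := Phi_nonneg h0 h1 s i
  have a2 := Phi_le_one h0 h1 s i
  have b1 := Phi_nonneg h0 h1 s' i
  have b2 := Phi_le_one h0 h1 s' i
  constructor <;> linarith

lemma K0_zero : (0 : V) ∈ range (Phi l) := by
  refine ⟨fun _ _ => false, ?_⟩
  ext i
  simp [Phi, dv]

lemma K0_smul {x : V} (hx : x ∈ range (Phi l)) : l • x ∈ range (Phi l) := by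
  obtain ⟨s, rfl⟩ := hx
  have := Phi_cons h0 h1 (fun _ => false) s
  have e : dv (fun _ => false) = 0 := by ext i; simp [dv]
  simpa [e] using this

lemma K0_small {x : V} (hx : x ∈ range (Phi l)) (hn : ‖x‖ ≤ l) :
    ∃ y ∈ range (Phi l), x = l • y := by
  obtain ⟨s, rfl⟩ := hx
  refine ⟨Phi l (fun n => s (n + 1)), mem_range_self _, ?_⟩
  have e : dv (s 0) = 0 := by
    ext i
    have h2 := (norm_le_pi_norm (Phi l s) i).trans hn
    rw [Phi_rec h0 h1] at h2
    have a1 := Phi_nonneg h0 h1 (fun n => s (n + 1)) i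
    simp only [Pi.add_apply, Pi.smul_apply, smul_eq_mul, Real.norm_eq_abs] at h2
    have h3 := (le_abs_self _).trans h2
    simp only [dv] at h3 ⊢
    split_ifs with h
    · simp only [h] at h3
      exfalso
      simp at h3
      nlinarith
    · rfl
  rw [Phi_rec h0 h1]
  simp [e]

lemma K0_cover (n : ℕ) : ∃ T : Finset V, T.card ≤ 8 ^ n ∧
    range (Phi l) ⊆ ⋃ p ∈ T, closedBall p (l ^ n) := by
  classical
  induction n with
  | zero =>
    refine ⟨{0}, by simp, fun x hx => ?_⟩
    simpa using K0_dist h0 h1 hx (K0_zero h0 h1)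
  | succ n ih =>
    obtain ⟨T, hT, hc⟩ := ih
    refine ⟨(Finset.univ ×ˢ T).image (fun q : Dig × V => (1 - l) • dv q.1 + l • q.2), ?_, ?_⟩
    · refine Finset.card_image_le.trans ?_
      rw [Finset.card_product, pow_succ']
      have : (Finset.univ : Finset Dig).card = 8 := by simp
      rw [this]
      omega
    · rintro _ ⟨s, rfl⟩
      have := hc (mem_range_self (fun n => s (n + 1)))
      simp only [mem_iUnion] at this ⊢
      obtain ⟨p, hp, hd⟩ := this
      refine ⟨(1 - l) • dv (s 0) + l • p, Finset.mem_image.2 ⟨(s 0, p), by simp [hp], rfl⟩, ?_⟩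
      rw [mem_closedBall] at hd ⊢
      rw [Phi_rec h0 h1, dist_add_left, dist_smul₀, Real.norm_of_nonneg h0.le, pow_succ']
      gcongr

lemma K0_hausdorff (h8 : 8 * l ^ 2 < 1) : μH[2] (range (Phi l)) = 0 := by
  choose T hT hc using K0_cover h0 h1
  have hlim : Tendsto (fun n => ENNReal.ofReal (4 * (8 * l ^ 2) ^ n)) atTop (𝓝 0) := by
    rw [← ENNReal.ofReal_zero]
    apply ENNReal.tendsto_ofReal
    simpa using (tendsto_pow_atTop_nhds_zero_of_lt_one (by positivity) h8).const_mul 4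
  have hr : Tendsto (fun n => ENNReal.ofReal (2 * l ^ n)) atTop (𝓝 0) := by
    rw [← ENNReal.ofReal_zero]
    apply ENNReal.tendsto_ofReal
    simpa using (tendsto_pow_atTop_nhds_zero_of_lt_one h0.le (by linarith)).const_mul 2
  have hdiam : ∀ n (p : V), ediam (closedBall p (l ^ n)) ≤ ENNReal.ofReal (2 * l ^ n) := by
    intro n p
    refine ediam_le_of_forall_dist_le fun x hx y hy => ?_
    have := dist_triangle_right x y p
    rw [mem_closedBall] at hx hy
    linarith
  have := Measure.hausdorffMeasure_le_liminf_sum 2 (range (Phi l)) (l := atTop)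
    (fun n => ENNReal.ofReal (2 * l ^ n)) hr
    (fun n (p : T n) => closedBall (p : V) (l ^ n)) (Eventually.of_forall fun n p => hdiam n p)
    (Eventually.of_forall fun n => by
      refine (hc n).trans ?_
      intro x hx
      simp only [mem_iUnion] at hx ⊢
      obtain ⟨p, hp, h⟩ := hx
      exact ⟨⟨p, hp⟩, h⟩)
  refine le_antisymm (this.trans ?_) bot_le
  rw [← hlim.liminf_eq]
  refine liminf_le_liminf (Eventually.of_forall fun n => ?_)
  calc ∑ i : T n, ediam (closedBall (i : V) (l ^ n)) ^ (2 : ℝ)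
      ≤ ∑ i : T n, ENNReal.ofReal (2 * l ^ n) ^ (2 : ℝ) := by
        gcongr with i; exact hdiam n i
    _ = (T n).card * ENNReal.ofReal ((2 * l ^ n) ^ 2) := by
        simp only [Finset.sum_const, nsmul_eq_mul, ENNReal.rpow_two]
        rw [ENNReal.ofReal_pow (by positivity)]
        simp
    _ ≤ ENNReal.ofReal (8 ^ n) * ENNReal.ofReal ((2 * l ^ n) ^ 2) := by
        gcongr
        rw [← ENNReal.ofReal_natCast]
        apply ENNReal.ofReal_le_ofReal
        exact_mod_cast hT n
    _ = _ := by
        rw [← ENNReal.ofReal_mul (by positivity)]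
        congr 1
        rw [mul_pow, mul_pow, ← pow_mul, ← pow_mul, mul_comm n 2]; ring

omit h0 h1 in
/-- The unbounded self-similar set. -/
def KK (l : ℝ) : Set V := {x | ∃ m : ℕ, l ^ m • x ∈ range (Phi l)}

lemma KK_mono {x : V} {m n : ℕ} (hmn : m ≤ n) (hx : l ^ m • x ∈ range (Phi l)) :
    l ^ n • x ∈ range (Phi l) := by
  induction n, hmn using Nat.le_induction with
  | base => exact hx
  | succ n _ ih =>
    rw [pow_succ', mul_smul]
    exact K0_smul h0 h1 ih

lemma KK_bdd {x : V} (hx : x ∈ KK l) (m : ℕ) (hm : l ^ m * ‖x‖ ≤ 1) :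
    l ^ m • x ∈ range (Phi l) := by
  obtain ⟨j, hj⟩ := hx
  by_cases hjm : j ≤ m
  · exact KK_mono h0 h1 hjm hj
  push Not at hjm
  have : ∀ i : ℕ, l ^ (m + i) • x ∈ range (Phi l) → l ^ m • x ∈ range (Phi l) := by
    intro i
    induction i with
    | zero => exact fun h => h
    | succ i ih =>
      intro h
      apply ih
      have hn : ‖l ^ (m + (i + 1)) • x‖ ≤ l := by
        rw [norm_smul, Real.norm_of_nonneg (by positivity)]
        have : l ^ (m + (i + 1)) * ‖x‖ = l ^ (i + 1) * (l ^ m * ‖x‖) := by ring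
        rw [this]
        have : l ^ (i + 1) ≤ l := by
          rw [pow_succ]; exact mul_le_of_le_one_left h0.le (pow_le_one₀ h0.le (by linarith))
        calc l ^ (i + 1) * (l ^ m * ‖x‖) ≤ l * 1 := by gcongr
          _ = l := mul_one l
      obtain ⟨y, hy, hxy⟩ := K0_small h0 h1 h hn
      have : l ^ (m + i) • x = y := by
        have e : l • (l ^ (m + i) • x) = l • y := by
          rw [← hxy, smul_smul, ← pow_succ', add_assoc]
        exact smul_right_injective V h0.ne' e
      rwa [this]
  exact this (j - m) (by rwa [Nat.add_sub_cancel' hjm.le])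

lemma exists_scale (B : ℝ) : ∃ m : ℕ, l ^ m * B ≤ 1 := by
  have : Tendsto (fun m : ℕ => l ^ m * B) atTop (𝓝 0) := by
    simpa using (tendsto_pow_atTop_nhds_zero_of_lt_one h0.le (by linarith)).mul_const B
  exact (this.eventually_le_const zero_lt_one).exists

lemma KK_closed : IsClosed (KK l) := by
  rw [← isSeqClosed_iff_isClosed]
  intro u x hu hux
  obtain ⟨m, hm⟩ := exists_scale h0 h1 (‖x‖ + 1)
  refine ⟨m, ?_⟩
  have hn : Tendsto (fun n => ‖u n‖) atTop (𝓝 ‖x‖) := hux.norm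
  have hev : ∀ᶠ n in atTop, l ^ m • u n ∈ range (Phi l) := by
    filter_upwards [hn.eventually_le_const (show ‖x‖ < ‖x‖ + 1 by linarith)] with n hn
    exact KK_bdd h0 h1 (hu n) m (le_trans (by gcongr) hm)
  exact (K0_compact h0 h1).isClosed.mem_of_tendsto (hux.const_smul (l ^ m)) hev

lemma KK_frost {t : ℝ} (ht : 0 < t) (hlt : l ^ t = 1 / 8) : ∃ C : ℝ, ∀ k ∈ KK l, ∀ R : ℝ, 0 < R →
    ∃ ν : Measure V, IsProbabilityMeasure ν ∧ ν (KK l ∩ closedBall k (R / 4))ᶜ = 0 ∧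
      ∀ z τ, 0 < τ → ν (closedBall z (2 * R * τ)) ≤ ENNReal.ofReal (C * τ ^ t) := by
  refine ⟨8 * (16 / (l * (1 - 2 * l))) ^ t, fun k hk R hR => ?_⟩
  have hl2 : 0 < 1 - 2 * l := by linarith
  obtain ⟨m, hm⟩ := exists_scale h0 h1 (max ‖k‖ (R / 4))
  have hmk : l ^ m • k ∈ range (Phi l) :=
    KK_bdd h0 h1 hk m (le_trans (by gcongr; exact le_max_left _ _) hm)
  have hmR : l ^ m * (R / 4) ≤ 1 := (le_trans (by gcongr; exact le_max_right _ _) hm)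
  obtain ⟨n, hn1, hn2⟩ := exists_nat_pow_near_of_lt_one (show 0 < l ^ m * (R / 4) by positivity)
    hmR h0 (by linarith)
  obtain ⟨s, hs⟩ := hmk
  obtain ⟨b, ⟨y, hy, hyb⟩, hb⟩ := piece h0 h1 (n + 1) s
  let φ : V → V := fun x => (l ^ m)⁻¹ • (b + l ^ (n + 1) • x)
  have hφ : Measurable φ := by fun_prop
  have hlm : (0:ℝ) < l ^ m := by positivity
  have hln : (0:ℝ) < l ^ (n + 1) := by positivity
  have hφd : ∀ x y, dist (φ x) (φ y) = (l ^ m)⁻¹ * (l ^ (n + 1) * dist x y) := by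
    intro x y
    simp only [φ]
    rw [dist_smul₀, dist_add_left, dist_smul₀, Real.norm_of_nonneg (by positivity),
      Real.norm_of_nonneg (by positivity)]
  have hky : k = φ y := by
    simp only [φ]
    rw [← hyb, hs, smul_smul, inv_mul_cancel₀ hlm.ne', one_smul]
  have := nu0_prob h0 h1
  refine ⟨(nu0 l).map φ, Measure.isProbabilityMeasure_map hφ.aemeasurable, ?_, ?_⟩
  · rw [Measure.map_apply hφ ((KK_closed h0 h1).inter isClosed_closedBall).measurableSet.compl]
    refine measure_mono_null ?_ (nu0_supp h0 h1)
    intro x hx hxK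
    apply hx
    refine ⟨⟨m, ?_⟩, ?_⟩
    · simp only [φ]
      rw [smul_smul, mul_inv_cancel₀ hlm.ne', one_smul]
      exact hb x hxK
    · rw [mem_closedBall, hky, hφd, inv_mul_le_iff₀ hlm]
      have := K0_dist h0 h1 hxK hy
      nlinarith
  · intro z τ hτ
    rw [Measure.map_apply hφ measurableSet_closedBall]
    have hsub : φ ⁻¹' closedBall z (2 * R * τ) ⊆
        closedBall ((l ^ (n + 1))⁻¹ • (l ^ m • z - b)) (8 * τ / l) := by
      intro x hx
      have hz : z = φ ((l ^ (n + 1))⁻¹ • (l ^ m • z - b)) := by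
        simp only [φ]
        rw [smul_smul, mul_inv_cancel₀ hln.ne', one_smul, add_sub_cancel, smul_smul,
          inv_mul_cancel₀ hlm.ne', one_smul]
      rw [mem_preimage, mem_closedBall] at hx
      conv at hx => enter [1, 2]; rw [hz]
      rw [hφd, inv_mul_le_iff₀ hlm] at hx
      rw [mem_closedBall, le_div_iff₀ h0]
      have h3 : l ^ m * (2 * R * τ) ≤ 8 * τ * l ^ n := by nlinarith
      have h4 := hx.trans h3
      rw [pow_succ] at h4
      have hln' : (0:ℝ) < l ^ n := by positivity
      refine le_of_mul_le_mul_left ?_ hln'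
      rw [pow_succ]
      linarith
    refine (measure_mono hsub).trans ((nu0_frost h0 h1 ht hlt _ _ (by positivity)).trans ?_)
    apply ENNReal.ofReal_le_ofReal
    rw [mul_assoc, ← Real.mul_rpow (by positivity) hτ.le]
    apply le_of_eq
    congr 2
    field_simp
    norm_num

lemma KK_vol (n : ℕ) : volume {v : V | v ∈ ball (0 : V) 1 ∧ ∃ k ∈ KK l, dist v k < l ^ n}
    ≤ ENNReal.ofReal (512 * (8 * l ^ 2) ^ n * l ^ n) := by
  obtain ⟨T, hT, hc⟩ := K0_cover h0 h1 (n + 1)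
  have hsub : {v : V | v ∈ ball (0 : V) 1 ∧ ∃ k ∈ KK l, dist v k < l ^ n} ⊆
      ⋃ p ∈ T, closedBall (l⁻¹ • p) (2 * l ^ n) := by
    rintro v ⟨hv, k, hk, hd⟩
    have hpow : l ^ n ≤ 1 := pow_le_one₀ h0.le (by linarith)
    have hkn : ‖k‖ ≤ 2 := by
      have h3 := norm_le_norm_add_norm_sub' k v
      rw [mem_ball_zero_iff] at hv
      rw [← dist_eq_norm, dist_comm] at h3
      linarith
    have hlk := KK_bdd h0 h1 hk 1 (by rw [pow_one]; nlinarith [norm_nonneg k])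
    rw [pow_one] at hlk
    have := hc hlk
    simp only [mem_iUnion] at this ⊢
    obtain ⟨p, hp, h⟩ := this
    refine ⟨p, hp, ?_⟩
    rw [mem_closedBall] at h ⊢
    have e : k = l⁻¹ • (l • k) := by rw [smul_smul, inv_mul_cancel₀ h0.ne', one_smul]
    have h4 : dist k (l⁻¹ • p) ≤ l ^ n := by
      rw [e, dist_smul₀, Real.norm_of_nonneg (by positivity), inv_mul_le_iff₀ h0, ← pow_succ']
      exact h
    linarith [dist_triangle v k (l⁻¹ • p)]
  refine (measure_mono hsub).trans ((measure_biUnion_finset_le _ _).trans ?_)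
  calc ∑ p ∈ T, volume (closedBall (l⁻¹ • p) (2 * l ^ n))
      = T.card * ENNReal.ofReal ((2 * (2 * l ^ n)) ^ 3) := by
        simp only [Real.volume_pi_closedBall _ (show 0 ≤ 2 * l ^ n by positivity), Fintype.card_fin,
          Finset.sum_const, nsmul_eq_mul]
    _ ≤ ENNReal.ofReal (8 ^ (n + 1)) * ENNReal.ofReal ((2 * (2 * l ^ n)) ^ 3) := by
        gcongr
        rw [← ENNReal.ofReal_natCast]
        apply ENNReal.ofReal_le_ofReal
        exact_mod_cast hT
    _ = _ := by
        rw [← ENNReal.ofReal_mul (by positivity)]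
        congr 1
        rw [mul_pow 8 (l ^ 2), ← pow_mul, mul_comm 2 n, pow_mul, pow_succ]; ring
end

/-- Everything we need about the gluing set. -/
theorem exists_fractal {ε : ℝ} (h0 : 0 < ε) (h1 : ε < 1) : ∃ (K : Set V) (t C : ℝ),
    2 - ε < t ∧ IsClosed K ∧ (0 : V) ∈ K ∧ (∀ x ∈ K, ∀ i, 0 ≤ x i) ∧
    (∀ k ∈ K, ∀ R : ℝ, 0 < R →
      ∃ ν : Measure V, IsProbabilityMeasure ν ∧ ν (K ∩ closedBall k (R / 4))ᶜ = 0 ∧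
      ∀ z τ, 0 < τ → ν (closedBall z (2 * R * τ)) ≤ ENNReal.ofReal (C * τ ^ t)) ∧
    μH[2] (K ∩ ball 0 1) = 0 ∧
    (∀ η : ℝ, 0 < η → ∃ r : ℝ, 0 < r ∧ r ≤ η ∧
      volume {v : V | v ∈ ball (0 : V) 1 ∧ ∃ k ∈ K, dist v k < r} ≤ ENNReal.ofReal (η * r)) := by
  set t := 2 - ε / 2 with ht
  have ht0 : 0 < t := by linarith
  set l : ℝ := (1 / 8) ^ (1 / t) with hl
  have hl0 : 0 < l := by positivity
  have hlt : l ^ t = 1 / 8 := by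
    rw [hl, ← Real.rpow_mul (by norm_num), one_div_mul_cancel ht0.ne', Real.rpow_one]
  have hl1 : l < 1 := Real.rpow_lt_one (by norm_num) (by norm_num) (by positivity)
  have hl2 : l ^ 2 < 1 / 8 := by
    rw [← hlt, ← Real.rpow_natCast]
    exact Real.rpow_lt_rpow_of_exponent_gt hl0 hl1 (by push_cast; linarith)
  have hlh : l < 1 / 2 := by nlinarith
  obtain ⟨C, hC⟩ := KK_frost hl0 hlh ht0 hlt
  refine ⟨KK l, t, C, by linarith, KK_closed hl0 hlh, ⟨0, by simpa using K0_zero hl0 hlh⟩, ?_, hC,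
    ?_, ?_⟩
  · rintro x ⟨m, hm⟩ i
    have := K0_nonneg hl0 hlh hm i
    rw [Pi.smul_apply, smul_eq_mul] at this
    exact nonneg_of_mul_nonneg_right this (by positivity)
  · refine measure_mono_null ?_ (K0_hausdorff hl0 hlh (by linarith))
    rintro x ⟨hx, hb⟩
    have := KK_bdd hl0 hlh hx 0 (by simpa using (mem_ball_zero_iff.1 hb).le)
    simpa using this
  · intro η hη
    have l1 : Tendsto (fun n : ℕ => 512 * (8 * l ^ 2) ^ n) atTop (𝓝 0) := by
      simpa using (tendsto_pow_atTop_nhds_zero_of_lt_one (by positivity)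
        (show 8 * l ^ 2 < 1 by linarith)).const_mul 512
    have l2 : Tendsto (fun n : ℕ => l ^ n) atTop (𝓝 0) :=
      tendsto_pow_atTop_nhds_zero_of_lt_one hl0.le hl1
    obtain ⟨n, hn1, hn2⟩ := ((l1.eventually_le_const hη).and (l2.eventually_le_const hη)).exists
    refine ⟨l ^ n, by positivity, hn2, (KK_vol hl0 hlh n).trans ?_⟩
    apply ENNReal.ofReal_le_ofReal
    gcongr
end DF

namespace DF

/-- `X` is the double of `V` along `K`: two isometric copies of `V` glued along `K`. -/
structure Dbl (K : Set V) {X : Type} [MetricSpace X] (ι : Bool → V → X) : Prop where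
  iso : ∀ i, Isometry (ι i)
  surj : ∀ x, ∃ i v, ι i v = x
  glue : ∀ k ∈ K, ∀ i j, ι i k = ι j k
  cross : ∀ i j, i ≠ j → ∀ v w, ∃ k ∈ K, dist (ι i v) (ι j w) = dist v k + dist k w

lemma inf_attained {K : Set V} (hK : IsClosed K) (h0 : (0 : V) ∈ K) (x y : V) :
    ∃ k ∈ K, (⨅ p : K, dist x (p : V) + dist y (p : V)) = dist x k + dist y k := by
  obtain ⟨k, hk, hmin⟩ := (show ContinuousOn (fun p : V => dist x p + dist y p) K by
      fun_prop).exists_isMinOn' (x₀ := (0 : V)) hK h0 (by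
      have : Tendsto (fun p : V => dist x p + dist y p) (cocompact V) atTop := by
        apply tendsto_atTop_mono (f := fun p : V => dist p x)
        · intro p; rw [dist_comm]; linarith [dist_nonneg (x := y) (y := p)]
        · exact tendsto_dist_right_cocompact_atTop x
      exact (this.eventually_ge_atTop _).filter_mono inf_le_left)
  refine ⟨k, hk, le_antisymm ?_ ?_⟩
  · exact ciInf_le (f := fun p : K => dist x (p : V) + dist y (p : V))
      ⟨0, by rintro _ ⟨p, rfl⟩; positivity⟩ ⟨k, hk⟩
  · have : Nonempty K := ⟨⟨0, h0⟩⟩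
    exact le_ciInf fun p => hmin p.2

theorem exists_dbl (K : Set V) (hK : IsClosed K) (h0 : (0 : V) ∈ K) :
    ∃ (X : Type) (_ : MetricSpace X) (ι : Bool → V → X), Dbl K ι := by
  have : Nonempty K := ⟨⟨0, h0⟩⟩
  have hΦ : Isometry (Subtype.val : K → V) := isometry_subtype_coe
  refine ⟨GlueSpace hΦ hΦ, inferInstance,
    fun i => if i then toGlueR hΦ hΦ else toGlueL hΦ hΦ, ?_, ?_, ?_, ?_⟩
  · intro i; cases i
    · simpa using toGlueL_isometry hΦ hΦ
    · simpa using toGlueR_isometry hΦ hΦ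
  · intro x
    obtain ⟨y, hy⟩ := Quotient.exists_rep x
    rcases y with v | v
    · exact ⟨false, v, hy⟩
    · exact ⟨true, v, hy⟩
  · intro k hk
    have := congrFun (toGlue_commute hΦ hΦ) ⟨k, hk⟩
    simp only [Function.comp] at this
    intro i j; cases i <;> cases j <;> simp [this]
  · intro i j hij v w
    cases i <;> cases j <;> simp at hij
    · obtain ⟨k, hk, h⟩ := inf_attained hK h0 v w
      refine ⟨k, hk, ?_⟩
      have : dist (toGlueL hΦ hΦ v) (toGlueR hΦ hΦ w)
        = (⨅ p : K, dist v (p : V) + dist w (p : V)) + 0 := rfl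
      simp only [Bool.false_eq_true, if_false, if_true, this, h, dist_comm w k, add_zero]
    · obtain ⟨k, hk, h⟩ := inf_attained hK h0 w v
      refine ⟨k, hk, ?_⟩
      have : dist (toGlueR hΦ hΦ v) (toGlueL hΦ hΦ w)
        = (⨅ p : K, dist w (p : V) + dist v (p : V)) + 0 := rfl
      simp only [Bool.false_eq_true, if_false, if_true, this, h, dist_comm w k, add_zero]
      ring

namespace Dbl
variable {K : Set V} {X : Type} [MetricSpace X] {ι : Bool → V → X} (H : Dbl K ι)
include H

lemma dist_same (i : Bool) (v w : V) : dist (ι i v) (ι i w) = dist v w := (H.iso i).dist_eq v w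

lemma le_dist (i j : Bool) (v w : V) : dist v w ≤ dist (ι i v) (ι j w) := by
  by_cases h : i = j
  · subst h; rw [H.dist_same]
  · obtain ⟨k, -, hk⟩ := H.cross i j h v w
    rw [hk]; exact dist_triangle _ _ _

lemma eq_of (i j : Bool) {v w : V} (h : ι i v = ι j w) : v = w := by
  have := H.le_dist i j v w
  rw [h, dist_self] at this
  exact dist_le_zero.1 this

lemma mem_of {i j : Bool} (hij : i ≠ j) {v w : V} (h : ι i v = ι j w) : v ∈ K := by
  obtain ⟨k, hk, hd⟩ := H.cross i j hij v w
  rw [h, dist_self] at hd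
  have h1 := dist_nonneg (x := v) (y := k)
  have h2 := dist_nonneg (x := k) (y := w)
  have : dist v k = 0 := by linarith
  rw [dist_eq_zero.1 this]; exact hk

lemma dist_glue {k : V} (hk : k ∈ K) (i j : Bool) (v : V) : dist (ι i k) (ι j v) = dist k v := by
  rw [H.glue k hk i j, H.dist_same]

lemma pre_ball (i : Bool) (v : V) (r : ℝ) : ι i ⁻¹' ball (ι i v) r = ball v r := by
  ext w; simp [H.dist_same]

lemma pre_ball_sub (i j : Bool) (v : V) (r : ℝ) : ι j ⁻¹' ball (ι i v) r ⊆ ball v r := by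
  intro w hw
  exact lt_of_le_of_lt (H.le_dist j i w v) hw

lemma pre_ball_glue {k : V} (hk : k ∈ K) (i j : Bool) (r : ℝ) :
    ι j ⁻¹' ball (ι i k) r = ball k r := by
  rw [H.glue k hk i j, H.pre_ball]

lemma proper : ProperSpace X := by
  refine ⟨fun x r => ?_⟩
  obtain ⟨i, v, rfl⟩ := H.surj x
  refine IsCompact.of_isClosed_subset (s := ι false '' closedBall v r ∪ ι true '' closedBall v r)
    (((isCompact_closedBall v r).image (H.iso _).continuous).union
      ((isCompact_closedBall v r).image (H.iso _).continuous)) isClosed_closedBall ?_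
  intro y hy
  obtain ⟨j, w, rfl⟩ := H.surj y
  have hw : w ∈ closedBall v r := (H.le_dist j i w v).trans hy
  cases j
  · exact Or.inl ⟨w, hw, rfl⟩
  · exact Or.inr ⟨w, hw, rfl⟩

lemma complete : CompleteSpace X := by
  have := H.proper
  infer_instance

end Dbl

/-- unit speed segment in V -/
noncomputable def useg (v w : V) (t : ℝ) : V := v + (t / dist v w) • (w - v)

lemma useg_zero (v w : V) : useg v w 0 = v := by simp [useg]
lemma useg_end (v w : V) : useg v w (dist v w) = w := by
  by_cases h : v = w
  · simp [useg, h]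
  · simp [useg, div_self (dist_ne_zero.2 h)]

lemma useg_dist {v w : V} (h : v ≠ w) (s t : ℝ) : dist (useg v w s) (useg v w t) = |s - t| := by
  have hd : 0 < dist v w := dist_pos.2 h
  rw [useg, useg, dist_add_left, dist_eq_norm, ← sub_smul, norm_smul, ← _root_.sub_div, norm_div,
    ← dist_eq_norm w v, dist_comm w v, Real.norm_eq_abs, Real.norm_eq_abs, abs_of_pos hd,
    div_mul_cancel₀ _ hd.ne']

lemma useg_lip (v w : V) : LipschitzWith 1 (useg v w) := by
  by_cases h : v = w
  · subst h
    have : useg v v = fun _ => v := by ext; simp [useg]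
    rw [this]; exact LipschitzWith.const' v
  · exact LipschitzWith.of_dist_le_mul fun s t => by rw [useg_dist h, Real.dist_eq]; simp

/-- A 1-Lipschitz (two-point) curve of full length is a geodesic. -/
lemma geod_of_lip {X : Type} [MetricSpace X] {γ : ℝ → X} {L : ℝ}
    (hγ : ∀ s ∈ Icc 0 L, ∀ t ∈ Icc 0 L, s ≤ t → dist (γ s) (γ t) ≤ t - s)
    (hL : L ≤ dist (γ 0) (γ L)) :
    ∀ s ∈ Icc 0 L, ∀ t ∈ Icc 0 L, dist (γ s) (γ t) = |s - t| := by
  have key : ∀ s ∈ Icc 0 L, ∀ t ∈ Icc 0 L, s ≤ t → dist (γ s) (γ t) = t - s := by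
    intro s hs t ht hst
    refine le_antisymm (hγ s hs t ht hst) ?_
    have h0 : (0:ℝ) ∈ Icc 0 L := ⟨le_rfl, hs.1.trans hs.2⟩
    have h1 : L ∈ Icc 0 L := ⟨hs.1.trans hs.2, le_rfl⟩
    have a := hγ 0 h0 s hs hs.1
    have b := hγ t ht L h1 ht.2
    have := dist_triangle4 (γ 0) (γ s) (γ t) (γ L)
    linarith
  intro s hs t ht
  rcases le_total s t with h | h
  · rw [key s hs t ht h, abs_sub_comm, abs_of_nonneg (by linarith)]
  · rw [dist_comm, key t ht s hs h, abs_of_nonneg (by linarith)]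

lemma Dbl.geodesic {K : Set V} {X : Type} [MetricSpace X] {ι : Bool → V → X} (H : Dbl K ι) :
    IsGeodesicSpace X := by
  intro x y
  obtain ⟨i, v, rfl⟩ := H.surj x
  obtain ⟨j, w, rfl⟩ := H.surj y
  by_cases hij : i = j
  · subst hij
    rw [H.dist_same]
    refine ⟨fun t => ι i (useg v w t), by simp [useg_zero], by simp [useg_end], ?_⟩
    apply geod_of_lip
    · intro s _ t _ hst
      rw [H.dist_same]
      have := (useg_lip v w).dist_le_mul s t
      rwa [NNReal.coe_one, one_mul, Real.dist_eq, abs_sub_comm, abs_of_nonneg (by linarith)] at this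
    · simp [useg_zero, useg_end, H.dist_same]
  · obtain ⟨k, hk, hd⟩ := H.cross i j hij v w
    rw [hd]
    set a := dist v k with ha
    set b := dist k w with hb
    have ha0 : 0 ≤ a := dist_nonneg
    have hb0 : 0 ≤ b := dist_nonneg
    set γ : ℝ → X := fun t => if t ≤ a then ι i (useg v k t) else ι j (useg k w (t - a)) with hγ
    have g1 : ∀ t, t ≤ a → γ t = ι i (useg v k t) := fun t h => if_pos h
    have g2 : ∀ t, a ≤ t → γ t = ι j (useg k w (t - a)) := by
      intro t h
      rcases h.lt_or_eq with h | h
      · exact if_neg (not_le.2 h)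
      · rw [← h, g1 a le_rfl, sub_self, useg_zero, ha, useg_end, H.glue k hk i j]
    have l1 : ∀ s t, s ≤ t → t ≤ a → dist (γ s) (γ t) ≤ t - s := by
      intro s t hst h
      rw [g1 t h, g1 s (hst.trans h), H.dist_same]
      have := (useg_lip v k).dist_le_mul s t
      rwa [NNReal.coe_one, one_mul, Real.dist_eq, abs_sub_comm, abs_of_nonneg (by linarith)] at this
    have l2 : ∀ s t, s ≤ t → a ≤ s → dist (γ s) (γ t) ≤ t - s := by
      intro s t hst h
      rw [g2 t (h.trans hst), g2 s h, H.dist_same]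
      have := (useg_lip k w).dist_le_mul (s - a) (t - a)
      rwa [NNReal.coe_one, one_mul, Real.dist_eq, sub_sub_sub_cancel_right,
        abs_sub_comm, abs_of_nonneg (by linarith)] at this
    have e0 : γ 0 = ι i v := by rw [g1 0 ha0, useg_zero]
    have e1 : γ (a + b) = ι j w := by
      rw [g2 _ (by linarith), add_sub_cancel_left, hb, useg_end]
    refine ⟨γ, e0, e1, ?_⟩
    apply geod_of_lip
    · intro s _ t _ hst
      rcases le_total t a with h | h
      · exact l1 s t hst h
      rcases le_total a s with h' | h'
      · exact l2 s t hst h'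
      · have := dist_triangle (γ s) (γ a) (γ t)
        linarith [l1 s a h' le_rfl, l2 a t h le_rfl]
    · rw [e0, e1, hd]

end DF

namespace DF

noncomputable def dmu {X : Type} [MeasurableSpace X] (ι : Bool → V → X) : Measure X :=
  Measure.map (ι false) volume + Measure.map (ι true) volume

lemma vol_ball (v : V) {r : ℝ} (hr : 0 < r) : volume (ball v r) = ENNReal.ofReal (8 * r ^ 3) := by
  rw [Real.volume_pi_ball _ hr]; congr 1; simp; ring

lemma borelRegular_all {X : Type} [MeasurableSpace X] (μ : Measure X) : BorelRegular μ :=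
  fun s => ⟨toMeasurable μ s, measurableSet_toMeasurable μ s, subset_toMeasurable μ s,
    measure_toMeasurable s⟩

namespace Dbl
variable {K : Set V} {X : Type} [MetricSpace X] [MeasurableSpace X] [BorelSpace X]
  {ι : Bool → V → X} (H : Dbl K ι)
include H

lemma emb (i : Bool) : MeasurableEmbedding (ι i) := (H.iso i).isClosedEmbedding.measurableEmbedding

lemma mu_apply (s : Set X) : dmu ι s = volume (ι false ⁻¹' s) + volume (ι true ⁻¹' s) := by
  rw [dmu, Measure.add_apply, (H.emb false).map_apply, (H.emb true).map_apply]

lemma setLInt (s : Set X) (f : X → ℝ≥0∞) : ∫⁻ x in s, f x ∂(dmu ι) =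
    (∫⁻ v in ι false ⁻¹' s, f (ι false v)) + ∫⁻ v in ι true ⁻¹' s, f (ι true v) := by
  rw [dmu, Measure.restrict_add, lintegral_add_measure, (H.emb false).restrict_map,
    (H.emb true).restrict_map, (H.emb false).lintegral_map, (H.emb true).lintegral_map]

lemma mu_ball_ge (x : X) {r : ℝ} (hr : 0 < r) : ENNReal.ofReal (8 * r ^ 3) ≤ dmu ι (ball x r) := by
  obtain ⟨i, v, rfl⟩ := H.surj x
  rw [H.mu_apply]
  cases i
  · rw [H.pre_ball, vol_ball v hr]; exact le_self_add
  · rw [H.pre_ball, vol_ball v hr]; exact le_add_self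

lemma mu_ball_le (x : X) {r : ℝ} (hr : 0 < r) :
    dmu ι (ball x r) ≤ ENNReal.ofReal (16 * r ^ 3) := by
  obtain ⟨i, v, rfl⟩ := H.surj x
  rw [H.mu_apply]
  calc _ ≤ volume (ball v r) + volume (ball v r) :=
        add_le_add (measure_mono (H.pre_ball_sub i _ v r)) (measure_mono (H.pre_ball_sub i _ v r))
    _ = _ := by
        rw [vol_ball v hr, ← ENNReal.ofReal_add (by positivity) (by positivity)]; congr 1; ring

lemma ahlfors : AhlforsRegular (dmu ι) 3 8 16 := by
  refine ⟨by norm_num, by norm_num, fun x r hr _ => ?_⟩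
  have : r ^ (3:ℝ) = r ^ 3 := by exact_mod_cast Real.rpow_natCast r 3
  rw [this]
  exact ⟨H.mu_ball_ge x hr, H.mu_ball_le x hr⟩

omit [MeasurableSpace X] [BorelSpace X] in
lemma diam_ball (x : X) {r : ℝ} (hr : 0 < r) : r ≤ diam (ball x r) := by
  obtain ⟨i, v, rfl⟩ := H.surj x
  refine le_of_forall_lt fun s hs => ?_
  obtain ⟨s', hs1, hs2⟩ := exists_between (max_lt hs hr)
  have h0 : 0 < s' := lt_of_le_of_lt (le_max_right _ _) hs1
  have hd : dist (v + fun _ => s') v = s' := by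
    rw [dist_eq_norm, add_sub_cancel_left, pi_norm_const]; simp [abs_of_pos h0]
  have : dist (ι i (v + fun _ => s')) (ι i v) ≤ diam (ball (ι i v) r) := by
    apply dist_le_diam_of_mem isBounded_ball
    · rw [mem_ball, H.dist_same, hd]; exact hs2
    · exact mem_ball_self hr
  rw [H.dist_same, hd] at this
  exact lt_of_lt_of_le (lt_of_le_of_lt (le_max_left _ _) hs1) this

lemma seg_ug {u : X → ℝ} {ρ : X → ℝ≥0∞} (hρ : Measurable ρ) (hu : IsUpperGradientOn u ρ univ)
    (i : Bool) (x y : V) : ENNReal.ofReal |u (ι i x) - u (ι i y)| ≤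
      ENNReal.ofReal (dist y x) * ∫⁻ τ in Ioc (0:ℝ) 1, ρ (ι i (y + τ • (x - y))) := by
  by_cases hxy : y = x
  · subst hxy; simp
  have hL : 0 < dist y x := dist_pos.2 hxy
  set L := dist y x with hLdef
  have h := hu L hL.le (fun t => ι i (useg y x t)) (by
    apply LipschitzWith.lipschitzOnWith
    have h2 := (H.iso i).lipschitz.comp (useg_lip y x)
    rw [one_mul] at h2
    exact h2) (mapsTo_univ _ _)
  simp only [hLdef, useg_end, useg_zero] at h
  refine h.trans ?_
  rw [← hLdef, ← lintegral_indicator measurableSet_Icc]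
  have hm : Measurable ((Icc 0 L).indicator fun t => ρ (ι i (useg y x t))) := by
    refine Measurable.indicator ?_ measurableSet_Icc
    exact hρ.comp ((H.iso i).continuous.measurable.comp (useg_lip y x).continuous.measurable)
  conv_lhs => rw [← Real.smul_map_volume_mul_left hL.ne']
  rw [lintegral_smul_measure, lintegral_map hm (by fun_prop), abs_of_pos hL, smul_eq_mul]
  refine mul_le_mul' le_rfl ?_
  rw [Measure.restrict_congr_set Ioc_ae_eq_Icc, ← lintegral_indicator measurableSet_Icc]
  refine lintegral_mono fun τ => ?_
  by_cases hτ : τ ∈ Icc (0:ℝ) 1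
  · have : L * τ ∈ Icc 0 L := ⟨mul_nonneg hL.le hτ.1, by nlinarith [hτ.2]⟩
    rw [indicator_of_mem this, indicator_of_mem hτ, useg, ← hLdef, mul_div_cancel_left₀ _ hL.ne']
  · have : L * τ ∉ Icc 0 L := by
      rintro ⟨h1, h2⟩
      exact hτ ⟨by nlinarith, by nlinarith⟩
    rw [indicator_of_notMem this]; exact zero_le

end Dbl

/-- the double integral functional -/
noncomputable def Jf (w : V → ℝ≥0∞) (k : V) (R : ℝ) (k' : V) : ℝ≥0∞ :=
  ∫⁻ x in ball k R, ∫⁻ τ in Ioc (0:ℝ) 1, w (k' + τ • (x - k'))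

lemma Jf_meas {w : V → ℝ≥0∞} (hw : Measurable w) (k : V) (R : ℝ) : Measurable (Jf w k R) := by
  unfold Jf
  refine Measurable.lintegral_prod_right' (f := fun q : V × V =>
    ∫⁻ τ in Ioc (0:ℝ) 1, w (q.1 + τ • (q.2 - q.1))) ?_
  refine Measurable.lintegral_prod_right' (f := fun q : (V × V) × ℝ =>
    w (q.1.1 + q.2 • (q.1.2 - q.1.1))) ?_
  exact hw.comp (by fun_prop)

lemma Dbl.J_bound {K : Set V} {X : Type} [MetricSpace X] [MeasurableSpace X] [BorelSpace X]
    {ι : Bool → V → X} (H : Dbl K ι) {u : X → ℝ} {ρ : X → ℝ≥0∞} (hρ : Measurable ρ)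
    (hu : IsUpperGradientOn u ρ univ) (i : Bool) {k k' : V} {R : ℝ} (hk' : k' ∈ ball k R) :
    ∫⁻ x in ball k R, ENNReal.ofReal |u (ι i x) - u (ι i k')| ≤
      ENNReal.ofReal (2 * R) * Jf (fun v => ρ (ι i v)) k R k' := by
  unfold Jf
  rw [← lintegral_const_mul' _ _ ENNReal.ofReal_ne_top]
  refine setLIntegral_mono' measurableSet_ball fun x hx => ?_
  refine (H.seg_ug hρ hu i x k').trans ?_
  gcongr
  have := dist_triangle_right k' x k
  rw [mem_ball] at hk' hx
  linarith

lemma osc_prob {X : Type} [MeasurableSpace X] (P : Measure X) [IsProbabilityMeasure P] (u : X → ℝ)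
    (hu : Integrable u P) (c : ℝ) : ENNReal.ofReal (∫ x, |u x - ∫ z, u z ∂P| ∂P) ≤
      2 * ∫⁻ x, ENNReal.ofReal |u x - c| ∂P := by
  have i1 : Integrable (fun x => |u x - c|) P := (hu.sub (integrable_const c)).abs
  rw [← ofReal_integral_eq_lintegral_ofReal i1 (ae_of_all _ fun _ => abs_nonneg _),
    show (2 : ℝ≥0∞) = ENNReal.ofReal 2 by simp, ← ENNReal.ofReal_mul (by norm_num)]
  apply ENNReal.ofReal_le_ofReal
  have h1 : |c - ∫ z, u z ∂P| ≤ ∫ x, |u x - c| ∂P := by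
    have : c - ∫ z, u z ∂P = ∫ z, (c - u z) ∂P := by
      rw [integral_sub (integrable_const c) hu]; simp
    rw [this]
    refine abs_integral_le_integral_abs.trans (le_of_eq ?_)
    simp_rw [abs_sub_comm]
  calc ∫ x, |u x - ∫ z, u z ∂P| ∂P ≤ ∫ x, (|u x - c| + |c - ∫ z, u z ∂P|) ∂P := by
        apply integral_mono (hu.sub (integrable_const _)).abs (i1.add (integrable_const _))
        intro x; exact abs_sub_le _ _ _
    _ = ∫ x, |u x - c| ∂P + |c - ∫ z, u z ∂P| := by
        rw [integral_add i1 (integrable_const _)]; simp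
    _ ≤ _ := by linarith

lemma osc_avg {X : Type} [MeasurableSpace X] (μ : Measure X) (B : Set X) (h0 : μ B ≠ 0)
    (ht : μ B ≠ ⊤) (u : X → ℝ) (hu : IntegrableOn u B μ) (c : ℝ) :
    ENNReal.ofReal (⨍ y in B, |u y - ⨍ z in B, u z ∂μ| ∂μ) ≤
      2 * ((μ B)⁻¹ * ∫⁻ x in B, ENNReal.ofReal |u x - c| ∂μ) := by
  have hP : IsProbabilityMeasure ((μ B)⁻¹ • μ.restrict B) :=
    ⟨by simp [ENNReal.inv_mul_cancel h0 ht]⟩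
  have := osc_prob ((μ B)⁻¹ • μ.restrict B) u (hu.smul_measure (ENNReal.inv_ne_top.2 h0)) c
  rw [lintegral_smul_measure, smul_eq_mul] at this
  simpa [average] using this

end DF

namespace DF

namespace Dbl
variable {K : Set V} {X : Type} [MetricSpace X] [MeasurableSpace X] [BorelSpace X]
  {ι : Bool → V → X} (H : Dbl K ι)
include H

lemma poinc_final {p : ℝ} (hp : 1 < p) {D : ℝ≥0∞} (hD : D ≠ ⊤) {u : X → ℝ}
    (hu : LocallyIntegrable u (dmu ι)) (ρ : X → ℝ≥0∞) (x : X) {r : ℝ} (hr : 0 < r) (c : ℝ)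
    (hc : ∫⁻ y in ball x r, ENNReal.ofReal |u y - c| ∂(dmu ι) ≤
      ENNReal.ofReal (8 * r) * (D * ((∫⁻ y in ball x (3 * r), ρ y ^ p ∂(dmu ι)) ^ (1 / p)
        * ENNReal.ofReal (432 * r ^ 3) ^ (1 - 1 / p)))) :
    ENNReal.ofReal (⨍ y in ball x r, |u y - ⨍ z in ball x r, u z ∂(dmu ι)| ∂(dmu ι)) ≤
        ENNReal.ofReal ((864 * D.toReal + 1) * diam (ball x r)) *
          (⨍⁻ y in ball x (3 * r), ρ y ^ p ∂(dmu ι)) ^ (1 / p) := by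
  have hprop := H.proper
  have hlo := H.mu_ball_ge x hr
  have hup := H.mu_ball_le x hr
  have h0 : dmu ι (ball x r) ≠ 0 := by
    intro h; rw [h] at hlo
    have : (0:ℝ) < 8 * r ^ 3 := by positivity
    simp at hlo; nlinarith
  have ht : dmu ι (ball x r) ≠ ⊤ := ne_top_of_le_ne_top ENNReal.ofReal_ne_top hup
  have hIntg : IntegrableOn u (ball x r) (dmu ι) :=
    (hu.integrableOn_isCompact (isCompact_closedBall x r)).mono_set ball_subset_closedBall
  refine (osc_avg (dmu ι) (ball x r) h0 ht u hIntg c).trans ?_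
  set A := ⨍⁻ y in ball x (3 * r), ρ y ^ p ∂(dmu ι) with hA
  set m := ENNReal.ofReal (432 * r ^ 3) with hm
  have hm3 : dmu ι (ball x (3 * r)) ≤ m := by
    refine (H.mu_ball_le x (by positivity)).trans (le_of_eq ?_)
    rw [hm]; congr 1; ring
  have hm3t : dmu ι (ball x (3 * r)) ≠ ⊤ := ne_top_of_le_ne_top ENNReal.ofReal_ne_top hm3
  have hp0 : 0 < 1 / p := by positivity
  have e1 : (∫⁻ y in ball x (3 * r), ρ y ^ p ∂(dmu ι)) ^ (1 / p) ≤ m ^ (1/p) * A ^ (1/p) := by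
    rw [← ENNReal.mul_rpow_of_nonneg _ _ hp0.le, ← measure_mul_setLAverage _ hm3t]
    gcongr
  have hm0 : m ≠ 0 := by rw [hm]; simp; positivity
  have e2 : m ^ (1/p) * m ^ (1 - 1/p) = m := by
    rw [← ENNReal.rpow_add _ _ hm0 ENNReal.ofReal_ne_top]; simp
  have e3 : ∫⁻ y in ball x r, ENNReal.ofReal |u y - c| ∂(dmu ι) ≤
      ENNReal.ofReal (8 * r) * D * m * A ^ (1/p) := by
    refine hc.trans ?_
    calc _ ≤ ENNReal.ofReal (8 * r) * (D * ((m ^ (1/p) * A ^ (1/p)) * m ^ (1 - 1 / p))) := by gcongr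
      _ = ENNReal.ofReal (8 * r) * D * (m ^ (1/p) * m ^ (1 - 1/p)) * A ^ (1/p) := by ring
      _ = _ := by rw [e2]
  have hd : D = ENNReal.ofReal D.toReal := (ENNReal.ofReal_toReal hD).symm
  have hdn : 0 ≤ D.toReal := ENNReal.toReal_nonneg
  calc _ ≤ 2 * ((ENNReal.ofReal (8 * r ^ 3))⁻¹ * (ENNReal.ofReal (8 * r) * D * m * A ^ (1/p))) := by
        gcongr
    _ = (2 * (ENNReal.ofReal (8 * r ^ 3))⁻¹ * ENNReal.ofReal (8 * r) * D * m) * A ^ (1/p) := by ring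
    _ = ENNReal.ofReal (864 * D.toReal * r) * A ^ (1/p) := by
        congr 1
        rw [← ENNReal.ofReal_inv_of_pos (by positivity), hd, hm,
          show (2 : ℝ≥0∞) = ENNReal.ofReal 2 by simp, ← ENNReal.ofReal_mul (by positivity),
          ← ENNReal.ofReal_mul (by positivity), ← ENNReal.ofReal_mul (by positivity),
          ← ENNReal.ofReal_mul (by positivity), ENNReal.toReal_ofReal hdn]
        congr 1
        field_simp
        ring
    _ ≤ _ := by
        gcongr
        · linarith
        · exact H.diam_ball x hr

lemma poincare {ε t C : ℝ} (h0 : 0 < ε) (ht : 2 - ε < t)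
    (hν : ∀ k ∈ K, ∀ R : ℝ, 0 < R →
      ∃ ν : Measure V, IsProbabilityMeasure ν ∧ ν (K ∩ closedBall k (R / 4))ᶜ = 0 ∧
      ∀ z τ, 0 < τ → ν (closedBall z (2 * R * τ)) ≤ ENNReal.ofReal (C * τ ^ t)) :
    ∃ CP, 1 ≤ CP ∧ WeakPoincare (dmu ι) (1 + ε) CP 3 := by
  obtain ⟨D1, hD1, hb1⟩ := seg_bound (p := 1 + ε) (t := t) (C := C) (by linarith) (by linarith)
  obtain ⟨D2, hD2, hb2⟩ := seg_bound (p := 1 + ε) (t := 3) (C := 8) (by linarith) (by linarith)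
  set p := 1 + ε with hp
  have hp1 : 1 < p := by linarith
  have hq : 0 ≤ 1 - 1 / p := by
    rw [sub_nonneg, div_le_one (by linarith)]; exact hp1.le
  refine ⟨864 * (D1 + D2).toReal + 1, by
    linarith [ENNReal.toReal_nonneg (a := D1 + D2)], ?_⟩
  intro u hu ρ hρ hug x r hr
  have hfin : D1 + D2 ≠ ⊤ := ENNReal.add_ne_top.2 ⟨hD1, hD2⟩
  have hw : ∀ i, Measurable fun v => ρ (ι i v) := fun i => hρ.comp (H.emb i).measurable
  obtain ⟨i, v, rfl⟩ := H.surj x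
  by_cases hcase : ∃ k ∈ K, dist v k < r
  · obtain ⟨k, hk, hvk⟩ := hcase
    obtain ⟨ν, hνp, hνK, hνb⟩ := hν k hk (2 * r) (by positivity)
    have hsub : K ∩ closedBall k (2 * r / 4) ⊆ ball k (2 * r) := by
      rintro z ⟨-, hz⟩
      rw [mem_closedBall] at hz; rw [mem_ball]; linarith
    have hν0 : ν (ball k (2 * r))ᶜ = 0 := measure_mono_null (compl_subset_compl.2 hsub) hνK
    have hb : ∀ j, ∫⁻ k', Jf (fun v => ρ (ι j v)) k (2 * r) k' ∂ν ≤
        D1 * ((∫⁻ z in ball k (2 * r), ρ (ι j z) ^ p) ^ (1/p)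
          * volume (ball k (2 * r)) ^ (1 - 1/p)) := fun j =>
      hb1 (2 * r) k ν hνp (by positivity) hν0 (fun z τ h _ => hνb z τ h) _ (hw j)
    obtain ⟨k', hk'K, hk'⟩ := exists_notMem_null_le_lintegral (μ := ν)
      (f := fun k' => Jf (fun v => ρ (ι false v)) k (2 * r) k'
        + Jf (fun v => ρ (ι true v)) k (2 * r) k')
      ((Jf_meas (hw false) _ _).add (Jf_meas (hw true) _ _)).aemeasurable hνK
    rw [notMem_compl_iff] at hk'K
    rw [lintegral_add_left (Jf_meas (hw false) _ _)] at hk'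
    have hk'b := hsub hk'K
    refine H.poinc_final hp1 hfin hu ρ (ι i v) hr (u (ι false k')) ?_
    have hB : ball (ι i v) r ⊆ ball (ι false k) (2 * r) := by
      apply ball_subset_ball'
      rw [dist_comm, H.dist_glue hk, dist_comm]; linarith
    have hB3 : ball (ι false k) (2 * r) ⊆ ball (ι i v) (3 * r) := by
      apply ball_subset_ball'
      rw [H.dist_glue hk, dist_comm]; linarith
    have hI : ∀ j, (∫⁻ z in ball k (2 * r), ρ (ι j z) ^ p) ≤
        ∫⁻ y in ball (ι i v) (3 * r), ρ y ^ p ∂(dmu ι) := by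
      intro j
      refine le_trans ?_ (lintegral_mono_set hB3)
      rw [H.setLInt, H.pre_ball_glue hk, H.pre_ball_glue hk]
      cases j
      · exact le_self_add
      · exact le_add_self
    have hvol : volume (ball k (2 * r)) ≤ ENNReal.ofReal (432 * r ^ 3) := by
      rw [vol_ball k (by positivity)]
      apply ENNReal.ofReal_le_ofReal
      nlinarith [pow_pos hr 3]
    calc ∫⁻ y in ball (ι i v) r, ENNReal.ofReal |u y - u (ι false k')| ∂(dmu ι)
        ≤ ∫⁻ y in ball (ι false k) (2 * r), ENNReal.ofReal |u y - u (ι false k')| ∂(dmu ι) :=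
          lintegral_mono_set hB
      _ ≤ ENNReal.ofReal (2 * (2 * r)) * Jf (fun v => ρ (ι false v)) k (2 * r) k' +
          ENNReal.ofReal (2 * (2 * r)) * Jf (fun v => ρ (ι true v)) k (2 * r) k' := by
          rw [H.setLInt, H.pre_ball_glue hk, H.pre_ball_glue hk]
          refine add_le_add (H.J_bound hρ hug false hk'b) ?_
          rw [H.glue k' hk'K.1 false true]
          exact H.J_bound hρ hug true hk'b
      _ ≤ ENNReal.ofReal (2 * (2 * r)) *
          (D1 * ((∫⁻ z in ball k (2 * r), ρ (ι false z) ^ p) ^ (1/p)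
            * volume (ball k (2 * r)) ^ (1 - 1/p)) +
          D1 * ((∫⁻ z in ball k (2 * r), ρ (ι true z) ^ p) ^ (1/p)
            * volume (ball k (2 * r)) ^ (1 - 1/p))) := by
          rw [← mul_add]
          exact mul_le_mul' le_rfl (hk'.trans (add_le_add (hb false) (hb true)))
      _ ≤ ENNReal.ofReal (2 * (2 * r)) *
          ((D1 + D2) * ((∫⁻ y in ball (ι i v) (3 * r), ρ y ^ p ∂(dmu ι)) ^ (1/p)
            * ENNReal.ofReal (432 * r ^ 3) ^ (1 - 1/p)) +
          (D1 + D2) * ((∫⁻ y in ball (ι i v) (3 * r), ρ y ^ p ∂(dmu ι)) ^ (1/p)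
            * ENNReal.ofReal (432 * r ^ 3) ^ (1 - 1/p))) := by
          gcongr
          · exact le_self_add
          · exact hI false
          · exact le_self_add
          · exact hI true
      _ = _ := by
          rw [← two_mul, ← mul_assoc, show (2 : ℝ≥0∞) = ENNReal.ofReal 2 by simp,
            ← ENNReal.ofReal_mul (by positivity)]
          congr 2; ring
  · push Not at hcase
    have hempty : ∀ j, j ≠ i → ι j ⁻¹' ball (ι i v) r = ∅ := by
      intro j hj
      rw [eq_empty_iff_forall_notMem]
      intro w hw
      obtain ⟨k, hk, hd⟩ := H.cross i j hj.symm v w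
      have h1 := hcase k hk
      rw [mem_preimage, mem_ball, dist_comm, hd] at hw
      linarith [dist_nonneg (x := k) (y := w)]
    have hset : ∀ f : X → ℝ≥0∞, ∫⁻ y in ball (ι i v) r, f y ∂(dmu ι)
        = ∫⁻ w in ball v r, f (ι i w) := by
      intro f
      rw [H.setLInt]
      cases i
      · rw [H.pre_ball, hempty true (by simp)]; simp
      · rw [H.pre_ball, hempty false (by simp)]; simp
    have hv0 : volume (ball v r) ≠ 0 := by
      rw [vol_ball v hr]; simp; positivity
    have hvt : volume (ball v r) ≠ ⊤ := by
      rw [vol_ball v hr]; exact ENNReal.ofReal_ne_top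
    set ν : Measure V := (volume (ball v r))⁻¹ • volume.restrict (ball v r) with hνdef
    have hνp : IsProbabilityMeasure ν := ⟨by simp [hνdef, ENNReal.inv_mul_cancel hv0 hvt]⟩
    have hν0 : ν (ball v r)ᶜ = 0 := by
      rw [hνdef, Measure.smul_apply, Measure.restrict_apply measurableSet_ball.compl]; simp
    have hνb : ∀ z τ, 0 < τ → τ ≤ 1 →
        ν (closedBall z (2 * r * τ)) ≤ ENNReal.ofReal (8 * τ ^ (3:ℝ)) := by
      intro z τ hτ _
      rw [hνdef, Measure.smul_apply, smul_eq_mul]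
      calc _ ≤ (volume (ball v r))⁻¹ * volume (closedBall z (2 * r * τ)) := by
            exact mul_le_mul' le_rfl (Measure.restrict_apply_le _ _)
        _ = _ := by
            rw [vol_ball v hr, Real.volume_pi_closedBall _ (by positivity),
              ← ENNReal.ofReal_inv_of_pos (by positivity), ← ENNReal.ofReal_mul (by positivity),
              show τ ^ (3:ℝ) = τ ^ 3 by exact_mod_cast Real.rpow_natCast τ 3]
            congr 1
            simp
            field_simp
            ring
    have hb := hb2 r v ν hνp hr hν0 hνb _ (hw i)
    obtain ⟨k', hk'K, hk'⟩ := exists_notMem_null_le_lintegral (μ := ν)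
      (Jf_meas (hw i) v r).aemeasurable hν0
    rw [notMem_compl_iff] at hk'K
    refine H.poinc_final hp1 hfin hu ρ (ι i v) hr (u (ι i k')) ?_
    rw [hset]
    have hI : (∫⁻ z in ball v r, ρ (ι i z) ^ p) ≤
        ∫⁻ y in ball (ι i v) (3 * r), ρ y ^ p ∂(dmu ι) := by
      rw [← hset fun y => ρ y ^ p]
      exact lintegral_mono_set (ball_subset_ball (by linarith))
    have hvol : volume (ball v r) ≤ ENNReal.ofReal (432 * r ^ 3) := by
      rw [vol_ball v hr]
      apply ENNReal.ofReal_le_ofReal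
      nlinarith [pow_pos hr 3]
    calc _ ≤ ENNReal.ofReal (2 * r) * Jf (fun v => ρ (ι i v)) v r k' := H.J_bound hρ hug i hk'K
      _ ≤ ENNReal.ofReal (8 * r) * (D2 * ((∫⁻ z in ball v r, ρ (ι i z) ^ p) ^ (1/p)
            * volume (ball v r) ^ (1 - 1/p))) := by
          gcongr
          · norm_num
          · exact hk'.trans hb
      _ ≤ _ := by
          gcongr
          exact le_add_self

end Dbl
end DF

namespace DF

noncomputable def cE : V := ![-1/2, -1/2, 0]
noncomputable def cF : V := ![1/2, -1/2, 0]

lemma coord_le {v c : V} {r : ℝ} (h : v ∈ closedBall c r) (i : Fin 3) : |v i - c i| ≤ r := by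
  rw [← Real.dist_eq]; exact (dist_le_pi_dist v c i).trans h

lemma E_facts {v : V} (h : v ∈ closedBall cE (1/8)) :
    v 0 ≤ -3/8 ∧ v 1 < 0 ∧ v ∈ ball (0 : V) 1 := by
  have h0 := abs_le.1 (coord_le h 0)
  have h1 := abs_le.1 (coord_le h 1)
  have h2 := abs_le.1 (coord_le h 2)
  simp [cE] at h0 h1 h2
  refine ⟨by linarith, by linarith, ?_⟩
  rw [mem_ball, dist_pi_lt_iff one_pos]
  intro i
  rw [Real.dist_eq, abs_lt]
  fin_cases i <;> simp <;> constructor <;> linarith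

lemma F_facts {v : V} (h : v ∈ closedBall cF (1/8)) :
    3/8 ≤ v 0 ∧ v 1 < 0 ∧ v ∈ ball (0 : V) 1 := by
  have h0 := abs_le.1 (coord_le h 0)
  have h1 := abs_le.1 (coord_le h 1)
  have h2 := abs_le.1 (coord_le h 2)
  simp [cF] at h0 h1 h2
  refine ⟨by linarith, by linarith, ?_⟩
  rw [mem_ball, dist_pi_lt_iff one_pos]
  intro i
  rw [Real.dist_eq, abs_lt]
  fin_cases i <;> simp <;> constructor <;> linarith

section
variable {X : Type} [MetricSpace X] (ι : Bool → V → X)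
def GG : Set X := ball (ι false 0) 1
def EE : Set X := ι false '' closedBall cE (1/8)
def FF : Set X := ι true '' closedBall cF (1/8)
def SS (K : Set V) : Set X := ι false '' (K ∩ closedBall 0 1)
end

lemma exists_proj {K : Set V} {X : Type} [MetricSpace X] {ι : Bool → V → X} (H : Dbl K ι) :
    ∃ π : X → V, (∀ i v, π (ι i v) = v) ∧ LipschitzWith 1 π := by
  choose a b hab using H.surj
  have hb : ∀ i v, b (ι i v) = v := fun i v => H.eq_of _ _ (hab (ι i v))
  refine ⟨b, hb, LipschitzWith.of_dist_le_mul fun x y => ?_⟩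
  have := H.le_dist (a x) (a y) (b x) (b y)
  rw [hab, hab] at this
  simpa using this

namespace Dbl
variable {K : Set V} {X : Type} [MetricSpace X] {ι : Bool → V → X} (H : Dbl K ι)
  (h0 : (0 : V) ∈ K)
include H

lemma nondeg (i : Bool) (c : V) : IsNondegContinuum (ι i '' closedBall c (1/8)) := by
  refine ⟨(isCompact_closedBall _ _).image (H.iso i).continuous, ?_, ?_⟩
  · refine ⟨⟨_, mem_image_of_mem _ (mem_closedBall_self (by norm_num))⟩, ?_⟩
    exact (convex_closedBall c _).isPreconnected.image _ (H.iso i).continuous.continuousOn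
  · refine Set.Nontrivial.image ?_ (H.iso i).injective
    refine ⟨c, mem_closedBall_self (by norm_num), c + fun _ => 1/8, ?_, ?_⟩
    · rw [mem_closedBall, dist_eq_norm, add_sub_cancel_left, pi_norm_const]; norm_num
    · intro h
      have := congrFun h 0
      simp at this

include h0

lemma mem_G (i : Bool) (v : V) : ι i v ∈ GG ι ↔ v ∈ ball (0 : V) 1 := by
  have := H.pre_ball_glue h0 false i 1
  rw [← this]; rfl

lemma G_domain : IsDomainWithCompactClosure (GG ι) := by
  have hp := H.proper
  refine ⟨isOpen_ball, ?_, isBounded_ball.isCompact_closure⟩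
  have : GG ι = ι false '' ball 0 1 ∪ ι true '' ball 0 1 := by
    ext x
    obtain ⟨i, v, rfl⟩ := H.surj x
    rw [H.mem_G h0]
    constructor
    · intro h; cases i
      · exact Or.inl ⟨v, h, rfl⟩
      · exact Or.inr ⟨v, h, rfl⟩
    · rintro (⟨w, hw, h⟩ | ⟨w, hw, h⟩)
      · rwa [← H.eq_of _ _ h]
      · rwa [← H.eq_of _ _ h]
  have hc : ∀ i, IsConnected (ι i '' ball 0 1) := fun i =>
    ⟨⟨_, mem_image_of_mem _ (mem_ball_self one_pos)⟩,
      (convex_ball (0:V) 1).isPreconnected.image _ (H.iso i).continuous.continuousOn⟩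
  rw [this]
  refine (hc false).union ⟨ι false 0, ⟨0, by simp, rfl⟩, ⟨0, by simp, ?_⟩⟩ (hc true)
  exact H.glue 0 h0 _ _

lemma E_sub : EE ι ⊆ GG ι := by
  rintro _ ⟨v, hv, rfl⟩
  rw [H.mem_G h0]; exact (E_facts hv).2.2

lemma F_sub : FF ι ⊆ GG ι := by
  rintro _ ⟨v, hv, rfl⟩
  rw [H.mem_G h0]; exact (F_facts hv).2.2

omit h0 in
lemma EF_disj : Disjoint (EE ι) (FF ι) := by
  rw [Set.disjoint_left]
  rintro _ ⟨v, hv, rfl⟩ ⟨w, hw, h⟩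
  have := H.eq_of _ _ h
  subst this
  linarith [(E_facts hv).1, (F_facts hw).1]

lemma not_K (i : Bool) {v : V} (hG : ι i v ∈ GG ι \ SS ι K) : v ∉ K := by
  intro hv
  apply hG.2
  exact ⟨v, ⟨hv, ball_subset_closedBall ((H.mem_G h0 i v).1 hG.1)⟩, H.glue v hv _ _⟩

lemma separates (hpos : ∀ x ∈ K, ∀ i, 0 ≤ x i) :
    SeparatesIn (SS ι K) (EE ι) (FF ι) (GG ι) := by
  have hE : EE ι ⊆ GG ι \ SS ι K := by
    intro x hx
    refine ⟨H.E_sub h0 hx, ?_⟩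
    rintro ⟨w, hw, h⟩
    obtain ⟨v, hv, rfl⟩ := hx
    rw [H.eq_of _ _ h] at hw
    linarith [(E_facts hv).2.1, hpos v hw.1 1]
  have hF : FF ι ⊆ GG ι \ SS ι K := by
    intro x hx
    refine ⟨H.F_sub h0 hx, ?_⟩
    rintro ⟨w, hw, h⟩
    obtain ⟨v, hv, rfl⟩ := hx
    rw [H.eq_of _ _ h] at hw
    linarith [(F_facts hv).2.1, hpos v hw.1 1]
  have hx : ι false cE ∈ EE ι := mem_image_of_mem _ (mem_closedBall_self (by norm_num))
  have hy : ι true cF ∈ FF ι := mem_image_of_mem _ (mem_closedBall_self (by norm_num))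
  refine ⟨_, hE hx, _, hF hy, (H.nondeg false cE).2.1.isPreconnected.subset_connectedComponentIn hx hE,
    (H.nondeg true cF).2.1.isPreconnected.subset_connectedComponentIn hy hF, ?_⟩
  intro heq
  have hop : ∀ i, IsOpen (range (ι i))ᶜ := fun i => (H.iso i).isClosedEmbedding.isClosed_range.isOpen_compl
  have hin : ∀ i v, ι i v ∈ GG ι \ SS ι K → ι i v ∈ (range (ι (!i)))ᶜ := by
    rintro i v hv ⟨w, hw⟩
    have : w ∈ K := H.mem_of (by simp) hw
    rw [H.eq_of _ _ hw] at this
    exact H.not_K h0 i hv this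
  have hyx : ι true cF ∈ connectedComponentIn (GG ι \ SS ι K) (ι false cE) := by
    rw [heq]; exact mem_connectedComponentIn (hF hy)
  obtain ⟨z, -, hz⟩ := (isPreconnected_connectedComponentIn (F := GG ι \ SS ι K)
    (x := ι false cE)) _ _ (hop true) (hop false) (by
      intro z hz
      have hz' := connectedComponentIn_subset _ _ hz
      obtain ⟨i, v, rfl⟩ := H.surj z
      have := hin i v hz'
      cases i
      · exact Or.inl this
      · exact Or.inr this)
    ⟨_, mem_connectedComponentIn (hE hx), hin _ _ (hE hx)⟩
    ⟨_, hyx, hin _ _ (hF hy)⟩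
  obtain ⟨i, v, rfl⟩ := H.surj z
  cases i
  · exact hz.2 (mem_range_self v)
  · exact hz.1 (mem_range_self v)

variable [MeasurableSpace X] [BorelSpace X]

lemma no_admissible (hK : IsClosed K) (hpos : ∀ x ∈ K, ∀ i, 0 ≤ x i)
    (hH : μH[2] (K ∩ ball 0 1) = 0) :
    ¬ ∃ ρ : X → ℝ≥0∞, Admissible (surfaceFamilyH 2 (EE ι) (FF ι) (GG ι)) ρ := by
  rintro ⟨ρ, -, hρ⟩
  have hz : μH[2] (SS ι K ∩ GG ι) = 0 := by
    refine measure_mono_null (t := ι false '' (K ∩ ball 0 1)) ?_ ?_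
    · rintro _ ⟨⟨v, hv, rfl⟩, hG⟩
      exact ⟨v, ⟨hv.1, (H.mem_G h0 _ _).1 hG⟩, rfl⟩
    · rw [(H.iso false).hausdorffMeasure_image (Or.inl (by norm_num)), hH]
  have := hρ ((μH[2]).restrict (SS ι K ∩ GG ι)) ⟨SS ι K, ?_, ?_, ?_, H.separates h0 hpos, rfl⟩
  · rw [Measure.restrict_eq_zero.2 hz] at this
    simp at this
  · exact ((isCompact_closedBall (0:V) 1).inter_left hK).image (H.iso false).continuous
  · rintro _ ⟨v, hv, rfl⟩
    have h1 : v ∈ closure (ball (0:V) 1) := by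
      rw [closure_ball _ one_ne_zero]; exact hv.2
    have h2 := image_closure_subset_closure_image (H.iso false).continuous (mem_image_of_mem _ h1)
    refine closure_mono ?_ h2
    rintro _ ⟨w, hw, rfl⟩
    exact (H.mem_G h0 _ _).2 hw
  · rw [hz]; simp

omit h0 in
lemma mod_ne_top : modulus (dmu ι) 3 (pathFamily (EE ι) (FF ι) (GG ι)) ≠ ⊤ := by
  obtain ⟨π, hπ, hπl⟩ := exists_proj H
  have hadm : Admissible (pathFamily (EE ι) (FF ι) (GG ι)) ((GG ι).indicator fun _ => 2) := by
    refine ⟨measurable_const.indicator isOpen_ball.measurableSet, ?_⟩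
    rintro ν ⟨γ, hc, -, -, hG, hE, hF, rfl⟩
    have hGm : MeasurableSet (GG ι) := isOpen_ball.measurableSet
    rw [lintegral_indicator hGm, lintegral_const, Measure.restrict_apply .univ, univ_inter,
      Measure.restrict_apply hGm, inter_eq_right.2 hG.image_subset]
    set f : X → ℝ := fun x => π x 0
    have hf : LipschitzWith 1 f := by
      have := (LipschitzWith.eval (α := fun _ : Fin 3 => ℝ) (0 : Fin 3)).comp hπl
      rwa [one_mul] at this
    have h1 : μH[1] (f '' (γ '' Icc 0 1)) ≤ μH[1] (γ '' Icc 0 1) := by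
      simpa using hf.hausdorffMeasure_image_le (d := 1) zero_le_one (γ '' Icc 0 1)
    have h2 : Icc (-3/8 : ℝ) (3/8) ⊆ f '' (γ '' Icc 0 1) := by
      have hcon : IsPreconnected (f '' (γ '' Icc 0 1)) :=
        (isPreconnected_Icc.image _ hc).image _ hf.continuous.continuousOn
      obtain ⟨v, hv, hv'⟩ := hE
      obtain ⟨w, hw, hw'⟩ := hF
      have e1 : f (γ 0) ≤ -3/8 := by
        simp only [f, ← hv', hπ]; exact (E_facts hv).1
      have e2 : 3/8 ≤ f (γ 1) := by
        simp only [f, ← hw', hπ]; exact (F_facts hw).1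
      refine Subset.trans (Icc_subset_Icc e1 e2) (hcon.Icc_subset ?_ ?_)
      · exact mem_image_of_mem _ (mem_image_of_mem _ (by simp))
      · exact mem_image_of_mem _ (mem_image_of_mem _ (by simp))
    have h3 := (measure_mono (μ := μH[1]) h2).trans h1
    rw [hausdorffMeasure_real, Real.volume_Icc] at h3
    calc (1 : ℝ≥0∞) ≤ 2 * ENNReal.ofReal (3/8 - -3/8) := by
          rw [show (2 : ℝ≥0∞) = ENNReal.ofReal 2 by simp, ← ENNReal.ofReal_mul (by norm_num)]
          rw [ENNReal.one_le_ofReal]; norm_num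
      _ ≤ _ := by gcongr
  refine ne_top_of_le_ne_top ?_ (iInf₂_le _ hadm)
  have : ∀ x, (GG ι).indicator (fun _ => (2:ℝ≥0∞)) x ^ (3:ℝ)
      = (GG ι).indicator (fun _ => (2:ℝ≥0∞) ^ (3:ℝ)) x := by
    intro x
    by_cases hx : x ∈ GG ι
    · simp [hx]
    · simp [hx]
  simp_rw [this]
  rw [lintegral_indicator (show MeasurableSet (GG ι) from isOpen_ball.measurableSet),
    setLIntegral_const]
  exact ENNReal.mul_ne_top (by simp)
    (ne_top_of_le_ne_top ENNReal.ofReal_ne_top (H.mu_ball_le _ one_pos))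

end Dbl
end DF

namespace DF

lemma haus_image_le {X : Type} [MetricSpace X] [MeasurableSpace X] [BorelSpace X] {g : ℝ → X}
    {Λ : ℝ≥0} (hg : LipschitzWith Λ g) {ρ : X → ℝ≥0∞} (hρ : Measurable ρ) (S : Set ℝ) :
    ∫⁻ x in g '' S, ρ x ∂μH[1] ≤ Λ * ∫⁻ t in S, ρ (g t) := by
  have hgm : Measurable g := hg.continuous.measurable
  rw [← lintegral_map (μ := volume.restrict S) hρ hgm, ← smul_eq_mul, ← lintegral_smul_measure]
  refine lintegral_mono' (Measure.le_iff.2 fun A hA => ?_) le_rfl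
  rw [Measure.restrict_apply hA, Measure.smul_apply, Measure.map_apply hgm hA,
    Measure.restrict_apply (hgm hA)]
  have : A ∩ g '' S = g '' (g ⁻¹' A ∩ S) := (image_preimage_inter g S A).symm
  rw [this]
  have := hg.hausdorffMeasure_image_le (d := 1) zero_le_one (g ⁻¹' A ∩ S)
  rw [hausdorffMeasure_real] at this
  simpa using this

/-- affine segment -/
def aseg (k' x : V) (τ : ℝ) : V := k' + τ • (x - k')

lemma aseg_lip {k' x : V} (h : dist k' x ≤ 2) : LipschitzWith 2 (aseg k' x) := by
  refine LipschitzWith.of_dist_le_mul fun s t => ?_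
  rw [aseg, aseg, dist_add_left, dist_eq_norm, ← sub_smul, norm_smul, ← dist_eq_norm,
    ← dist_eq_norm x k', dist_comm x k', mul_comm]
  simp only [NNReal.coe_ofNat]
  exact mul_le_mul_of_nonneg_right h dist_nonneg

namespace Dbl
variable {K : Set V} {X : Type} [MetricSpace X] {ι : Bool → V → X} (H : Dbl K ι)
  (h0 : (0 : V) ∈ K)
include H h0

lemma curve_mem [MeasurableSpace X] [BorelSpace X] {e k f : V} (he : e ∈ closedBall cE (1/8)) (hf : f ∈ closedBall cF (1/8))
    (hk : k ∈ K) (hk0 : 0 ≤ k 0) (hk1 : k ∈ closedBall (0:V) (1/4)) {ρ : X → ℝ≥0∞}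
    (hρ : Admissible (pathFamily (EE ι) (FF ι) (GG ι)) ρ) :
    1 ≤ 2 * ((∫⁻ τ in Ioc (0:ℝ) 1, ρ (ι false (aseg k e τ))) +
      ∫⁻ τ in Ioc (0:ℝ) 1, ρ (ι true (aseg k f τ))) := by
  obtain ⟨π, hπ, hπl⟩ := exists_proj H
  have hkb : k ∈ ball (0:V) 1 := by
    rw [mem_closedBall] at hk1; rw [mem_ball]; linarith
  have hdist : ∀ {x : V}, x ∈ ball (0:V) 1 → dist k x ≤ 2 := by
    intro x hx
    rw [mem_ball] at hx hkb
    linarith [dist_triangle_right k x 0]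
  have hbig : ∀ {x : V}, x ∈ ball (0:V) 1 → ∀ τ ∈ Icc (0:ℝ) 1, aseg k x τ ∈ ball (0:V) 1 := by
    intro x hx τ hτ
    exact (convex_ball (0:V) 1).add_smul_sub_mem hkb hx hτ
  obtain ⟨e0, -, eb⟩ := E_facts he
  obtain ⟨f0, -, fb⟩ := F_facts hf
  have hk4 : k 0 ≤ 1/4 := by
    have := abs_le.1 (coord_le hk1 0)
    simp at this; linarith
  set γ : ℝ → X := fun t => if t ≤ 1/2 then ι false (aseg k e (1 - 2 * t)) else
    ι true (aseg k f (2 * t - 1)) with hγ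
  have g1 : ∀ t, t ≤ 1/2 → γ t = ι false (aseg k e (1 - 2 * t)) := fun t h => if_pos h
  have g2 : ∀ t, 1/2 ≤ t → γ t = ι true (aseg k f (2 * t - 1)) := by
    intro t h
    rcases h.lt_or_eq with h | h
    · exact if_neg (not_le.2 h)
    · rw [← h, g1 _ le_rfl]; norm_num [aseg]; exact H.glue k hk _ _
  have l1 : ∀ s t, s ≤ t → t ≤ 1/2 → dist (γ s) (γ t) ≤ 4 * (t - s) := by
    intro s t hst h
    rw [g1 t h, g1 s (hst.trans h), H.dist_same]
    have := (aseg_lip (hdist eb)).dist_le_mul (1 - 2 * s) (1 - 2 * t)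
    rw [Real.dist_eq, abs_of_nonneg (by linarith)] at this
    simp only [NNReal.coe_ofNat] at this
    linarith
  have l2 : ∀ s t, s ≤ t → 1/2 ≤ s → dist (γ s) (γ t) ≤ 4 * (t - s) := by
    intro s t hst h
    rw [g2 t (h.trans hst), g2 s h, H.dist_same]
    have := (aseg_lip (hdist fb)).dist_le_mul (2 * s - 1) (2 * t - 1)
    rw [Real.dist_eq, abs_sub_comm, abs_of_nonneg (by linarith)] at this
    simp only [NNReal.coe_ofNat] at this
    linarith
  have l3 : ∀ s t, s ≤ t → dist (γ s) (γ t) ≤ 4 * (t - s) := by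
    intro s t hst
    rcases le_total t (1/2) with h | h
    · exact l1 s t hst h
    rcases le_total (1/2) s with h' | h'
    · exact l2 s t hst h'
    · have := dist_triangle (γ s) (γ (1/2)) (γ t)
      linarith [l1 s (1/2) h' le_rfl, l2 (1/2) t h le_rfl]
  have hlip : LipschitzWith 4 γ := by
    refine LipschitzWith.of_dist_le_mul fun s t => ?_
    simp only [NNReal.coe_ofNat, Real.dist_eq]
    rcases le_total s t with h | h
    · rw [abs_sub_comm, abs_of_nonneg (by linarith)]; exact l3 s t h
    · rw [dist_comm, abs_of_nonneg (by linarith)]; exact l3 t s h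
  have hcoord : ∀ x τ, aseg k x τ 0 = k 0 + τ * (x 0 - k 0) := by
    intro x τ; simp [aseg]
  have hinj : InjOn γ (Icc 0 1) := by
    have hmono : StrictMonoOn (fun t => π (γ t) 0) (Icc 0 1) := by
      intro s _ t _ hst
      simp only
      rcases le_total t (1/2) with h | h
      · rw [g1 s (by linarith), g1 t h, hπ, hπ, hcoord, hcoord]
        nlinarith
      rcases le_total (1/2) s with h' | h'
      · rw [g2 s h', g2 t h, hπ, hπ, hcoord, hcoord]
        nlinarith
      · rw [g1 s h', g2 t h, hπ, hπ, hcoord, hcoord]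
        rcases h'.lt_or_eq with h'' | h''
        · nlinarith
        · nlinarith
    intro s hs t ht hst
    exact hmono.injOn hs ht (by simp only [hst])
  have hmem : (μH[1]).restrict (γ '' Icc 0 1) ∈ pathFamily (EE ι) (FF ι) (GG ι) := by
    refine ⟨γ, hlip.continuous.continuousOn, hinj, ?_, ?_, ?_, ?_, rfl⟩
    · have := (hlip.lipschitzOnWith (s := Icc 0 1)).locallyBoundedVariationOn 0 1 (by simp) (by simp)
      simpa [BoundedVariationOn] using this
    · intro t ht
      rcases le_total t (1/2) with h | h
      · rw [g1 t h, H.mem_G h0]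
        exact hbig eb _ ⟨by linarith, by linarith [ht.1]⟩
      · rw [g2 t h, H.mem_G h0]
        exact hbig fb _ ⟨by linarith, by linarith [ht.2]⟩
    · rw [g1 0 (by norm_num)]; simp only [aseg]
      exact ⟨e, he, by simp⟩
    · rw [g2 1 (by norm_num)]; simp only [aseg]
      refine ⟨f, hf, ?_⟩
      norm_num
  refine (hρ.2 _ hmem).trans ?_
  have hsub : γ '' Icc 0 1 ⊆ (fun τ => ι false (aseg k e τ)) '' Icc 0 1 ∪
      (fun τ => ι true (aseg k f τ)) '' Icc 0 1 := by
    rintro _ ⟨t, ht, rfl⟩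
    rcases le_total t (1/2) with h | h
    · rw [g1 t h]; exact Or.inl ⟨_, ⟨by linarith, by linarith [ht.1]⟩, rfl⟩
    · rw [g2 t h]; exact Or.inr ⟨_, ⟨by linarith, by linarith [ht.2]⟩, rfl⟩
  refine (lintegral_mono_set hsub).trans ((lintegral_union_le _ _ _).trans ?_)
  rw [mul_add, Measure.restrict_congr_set (Ioc_ae_eq_Icc (α := ℝ))]
  have hl : ∀ i x, x ∈ ball (0:V) 1 → LipschitzWith 2 (fun τ => ι i (aseg k x τ)) := by
    intro i x hx
    have := (H.iso i).lipschitz.comp (aseg_lip (hdist hx))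
    rwa [one_mul] at this
  refine add_le_add ?_ ?_
  · simpa using haus_image_le (hl false e eb) hρ.1 (Icc 0 1)
  · simpa using haus_image_le (hl true f fb) hρ.1 (Icc 0 1)

lemma mod_pos [MeasurableSpace X] [BorelSpace X] {t C : ℝ} (ht : 0 < t)
    (hpos : ∀ x ∈ K, ∀ i, 0 ≤ x i)
    (hν : ∀ k ∈ K, ∀ R : ℝ, 0 < R →
      ∃ ν : Measure V, IsProbabilityMeasure ν ∧ ν (K ∩ closedBall k (R / 4))ᶜ = 0 ∧
      ∀ z τ, 0 < τ → ν (closedBall z (2 * R * τ)) ≤ ENNReal.ofReal (C * τ ^ t)) :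
    0 < modulus (dmu ι) 3 (pathFamily (EE ι) (FF ι) (GG ι)) := by
  obtain ⟨D, hD, hb⟩ := seg_bound (p := 3) (t := t) (C := C) (by norm_num) (by linarith)
  obtain ⟨ν, hνp, hνK, hνb⟩ := hν 0 h0 1 one_pos
  have hsub : K ∩ closedBall (0:V) (1/4) ⊆ ball 0 1 := by
    rintro z ⟨-, hz⟩
    rw [mem_closedBall] at hz; rw [mem_ball]; linarith
  have hν0 : ν (ball 0 1)ᶜ = 0 := measure_mono_null (compl_subset_compl.2 hsub) hνK
  set v := ENNReal.ofReal (8 * (1/8) ^ 3) with hv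
  set M := D * volume (ball (0:V) 1) ^ (1 - 1 / (3:ℝ)) with hM
  have hMt : 2 * M ≠ ⊤ := by
    refine ENNReal.mul_ne_top (by simp) (ENNReal.mul_ne_top hD (ENNReal.rpow_ne_top_of_nonneg (by norm_num) ?_))
    rw [vol_ball _ one_pos]; exact ENNReal.ofReal_ne_top
  have hvpos : 4⁻¹ * v ≠ 0 := by
    refine mul_ne_zero (by simp) ?_
    rw [hv]; simp
  refine lt_of_lt_of_le (b := (4⁻¹ * v / (2 * M)) ^ (3:ℝ)) ?_ ?_
  · exact ENNReal.rpow_pos_of_nonneg (ENNReal.div_pos hvpos hMt) (by norm_num)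
  refine le_iInf₂ fun ρ hρ => ?_
  have hw : ∀ i, Measurable fun v => ρ (ι i v) := fun i => hρ.1.comp (H.emb i).measurable
  have hbi : ∀ j, ∫⁻ k', Jf (fun v => ρ (ι j v)) 0 1 k' ∂ν ≤
      M * (∫⁻ x, ρ x ^ (3:ℝ) ∂(dmu ι)) ^ (1/(3:ℝ)) := by
    intro j
    refine (hb 1 0 ν hνp one_pos hν0 (fun z τ h _ => hνb z τ h) _ (hw j)).trans ?_
    rw [hM, mul_assoc, mul_comm (volume _ ^ _)]
    have : ∫⁻ z in ball (0:V) 1, ρ (ι j z) ^ (3:ℝ) ≤ ∫⁻ x, ρ x ^ (3:ℝ) ∂(dmu ι) := by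
      refine (setLIntegral_le_lintegral _ _).trans ?_
      rw [← setLIntegral_univ (μ := dmu ι), H.setLInt]
      simp only [preimage_univ, Measure.restrict_univ]
      cases j
      · exact le_self_add
      · exact le_add_self
    gcongr
  have hJ : ∀ k ∈ K ∩ closedBall (0:V) (1/4), 4⁻¹ * v ≤
      Jf (fun v => ρ (ι false v)) 0 1 k + Jf (fun v => ρ (ι true v)) 0 1 k := by
    intro k hk
    have key := fun e he f hf => H.curve_mem h0 (e := e) (k := k) (f := f) he hf hk.1
      (hpos k hk.1 0) hk.2 hρ
    have hgen : ∀ (i : Bool) (c : V), ball c (1/8) ⊆ ball (0:V) 1 →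
        (∀ e ∈ closedBall c (1/8), 4⁻¹ ≤ ∫⁻ τ in Ioc (0:ℝ) 1, ρ (ι i (aseg k e τ))) →
        4⁻¹ * v ≤ Jf (fun v => ρ (ι i v)) 0 1 k := by
      intro i c hc h
      unfold Jf
      refine le_trans ?_ (lintegral_mono_set hc)
      rw [hv, ← vol_ball c (by norm_num), ← setLIntegral_const]
      exact setLIntegral_mono' measurableSet_ball fun x hx => h x (ball_subset_closedBall hx)
    by_cases hcase : ∀ e ∈ closedBall cE (1/8), 4⁻¹ ≤ ∫⁻ τ in Ioc (0:ℝ) 1, ρ (ι false (aseg k e τ))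
    · exact (hgen false cE (fun x hx => (E_facts (ball_subset_closedBall hx)).2.2) hcase).trans
        le_self_add
    · push Not at hcase
      obtain ⟨e, he, hlt⟩ := hcase
      refine (hgen true cF (fun x hx => (F_facts (ball_subset_closedBall hx)).2.2) ?_).trans
        le_add_self
      intro f hf
      by_contra hcon
      push Not at hcon
      have h1 := key e he f hf
      have h2 := ENNReal.add_lt_add hlt hcon
      have h3 : (4⁻¹ + 4⁻¹ : ℝ≥0∞) = 2⁻¹ := by
        rw [← two_mul, show (4:ℝ≥0∞) = 2 * 2 by norm_num,
          ENNReal.mul_inv (by simp) (by simp), ← mul_assoc, ENNReal.mul_inv_cancel (by simp) (by simp),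
          one_mul]
      rw [h3] at h2
      rw [← one_div] at h2
      have h4 := ENNReal.mul_lt_of_lt_div' h2
      exact absurd h1 (not_le.2 h4)
  have hfin : 4⁻¹ * v ≤ (∫⁻ x, ρ x ^ (3:ℝ) ∂(dmu ι)) ^ (1/(3:ℝ)) * (2 * M) := by
    calc 4⁻¹ * v = ∫⁻ _, 4⁻¹ * v ∂ν := by simp
      _ ≤ ∫⁻ k, (Jf (fun v => ρ (ι false v)) 0 1 k + Jf (fun v => ρ (ι true v)) 0 1 k) ∂ν := by
          apply lintegral_mono_ae
          have : ∀ᵐ k ∂ν, k ∈ K ∩ closedBall (0:V) (1/4) := hνK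
          filter_upwards [this] with k hk using hJ k hk
      _ ≤ M * (∫⁻ x, ρ x ^ (3:ℝ) ∂(dmu ι)) ^ (1/(3:ℝ)) +
          M * (∫⁻ x, ρ x ^ (3:ℝ) ∂(dmu ι)) ^ (1/(3:ℝ)) := by
          rw [lintegral_add_left (Jf_meas (hw false) _ _)]
          exact add_le_add (hbi false) (hbi true)
      _ = _ := by ring
  have := ENNReal.rpow_le_rpow (ENNReal.div_le_of_le_mul hfin) (show (0:ℝ) ≤ 3 by norm_num)
  refine this.trans (le_of_eq ?_)
  rw [← ENNReal.rpow_mul]; norm_num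

end Dbl
end DF

namespace DF

/-- Upper gradient of a truncated 1-Lipschitz function. -/
lemma trunc_ug {X : Type} [MetricSpace X] {h : X → ℝ} (hh : LipschitzWith 1 h) (hn : ∀ x, 0 ≤ h x)
    {r : ℝ} (hr : 0 < r) : IsUpperGradientOn (fun x => min 1 (h x / r))
      ({x | 0 < h x ∧ h x < r}.indicator fun _ => ENNReal.ofReal (1 / r)) univ := by
  intro L hL γ hγ _
  set u : X → ℝ := fun x => min 1 (h x / r) with hu
  set A : Set X := {x | 0 < h x ∧ h x < r} with hA
  have hAo : IsOpen A := (isOpen_lt continuous_const hh.continuous).inter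
    (isOpen_lt hh.continuous continuous_const)
  obtain ⟨O, hO, hOeq⟩ := continuousOn_iff'.1 hγ.continuousOn A hAo
  set T := γ ⁻¹' A ∩ Icc 0 L with hT
  have hTm : MeasurableSet T := by rw [hOeq]; exact hO.measurableSet.inter measurableSet_Icc
  set c : ℝ≥0 := ⟨1 / r, by positivity⟩ with hc
  have hc' : ENNReal.ofReal (1 / r) = c := by
    rw [ENNReal.ofReal, hc]; congr 1; ext; simp [hr.le]; rfl
  have hul : LipschitzWith c u := by
    have h1 : LipschitzWith c fun x => h x / r := by
      refine LipschitzWith.of_dist_le_mul fun x y => ?_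
      have := hh.dist_le_mul x y
      rw [NNReal.coe_one, one_mul] at this
      rw [Real.dist_eq, ← _root_.sub_div, abs_div, abs_of_pos hr, ← Real.dist_eq]
      change _ ≤ 1 / r * _
      rw [one_div_mul_eq_div]
      gcongr
    exact h1.const_min 1
  have hg : LipschitzOnWith c (u ∘ γ) (Icc 0 L) := by
    have := hul.comp_lipschitzOnWith hγ
    rwa [mul_one] at this
  have hu01 : ∀ x, u x ∈ Icc (0:ℝ) 1 := fun x =>
    ⟨le_min zero_le_one (div_nonneg (hn x) hr.le), min_le_left _ _⟩
  have hsub : Ioo (min (u (γ 0)) (u (γ L))) (max (u (γ 0)) (u (γ L))) ⊆ (u ∘ γ) '' T := by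
    intro y hy
    have hcon : IsPreconnected ((u ∘ γ) '' Icc 0 L) := isPreconnected_Icc.image _ hg.continuousOn
    have m0 : u (γ 0) ∈ (u ∘ γ) '' Icc 0 L := ⟨0, ⟨le_rfl, hL⟩, rfl⟩
    have m1 : u (γ L) ∈ (u ∘ γ) '' Icc 0 L := ⟨L, ⟨hL, le_rfl⟩, rfl⟩
    have : y ∈ (u ∘ γ) '' Icc 0 L :=
      hcon.ordConnected.uIcc_subset m0 m1 ⟨hy.1.le, hy.2.le⟩
    obtain ⟨t, ht, hty⟩ := this
    refine ⟨t, ⟨?_, ht⟩, hty⟩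
    have y0 : 0 < y := lt_of_le_of_lt (le_min (hu01 _).1 (hu01 _).1) hy.1
    have y1 : y < 1 := lt_of_lt_of_le hy.2 (max_le (hu01 _).2 (hu01 _).2)
    simp only [Function.comp, hu] at hty
    have h1 : h (γ t) / r < 1 := by
      by_contra hcon
      rw [min_eq_left (not_lt.1 hcon)] at hty; linarith
    rw [min_eq_right h1.le] at hty
    rw [div_lt_one hr] at h1
    refine ⟨?_, h1⟩
    rw [← hty] at y0
    by_contra hcon
    exact absurd y0 (not_lt.2 (div_nonpos_of_nonpos_of_nonneg (not_lt.1 hcon) hr.le))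
  have hvol := (hg.mono (inter_subset_right : T ⊆ _)).hausdorffMeasure_image_le
    (d := 1) zero_le_one
  rw [hausdorffMeasure_real, ENNReal.rpow_one] at hvol
  calc ENNReal.ofReal |u (γ L) - u (γ 0)|
      = volume (Ioo (min (u (γ 0)) (u (γ L))) (max (u (γ 0)) (u (γ L)))) := by
        rw [Real.volume_Ioo, max_sub_min_eq_abs]
    _ ≤ c * volume T := (measure_mono hsub).trans hvol
    _ = ∫⁻ _ in T, c := by rw [setLIntegral_const]
    _ = ∫⁻ t in T, A.indicator (fun _ => ENNReal.ofReal (1 / r)) (γ t) := by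
        refine setLIntegral_congr_fun hTm fun t ht => ?_
        rw [indicator_of_mem (show γ t ∈ A from ht.1), hc']
    _ ≤ _ := lintegral_mono_set inter_subset_right

namespace Dbl
variable {K : Set V} {X : Type} [MetricSpace X] {ι : Bool → V → X} (H : Dbl K ι)
  (h0 : (0 : V) ∈ K) [MeasurableSpace X] [BorelSpace X]
include H

lemma locFin : IsLocallyFiniteMeasure (dmu ι) := by
  refine ⟨fun x => ⟨ball x 1, ball_mem_nhds x one_pos, ?_⟩⟩
  exact lt_of_le_of_lt (H.mu_ball_le x one_pos) ENNReal.ofReal_lt_top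

include h0

lemma not_one_poincare (hvol : ∀ η : ℝ, 0 < η → ∃ r : ℝ, 0 < r ∧ r ≤ η ∧
      volume {v : V | v ∈ ball (0 : V) 1 ∧ ∃ k ∈ K, dist v k < r} ≤ ENNReal.ofReal (η * r))
    (CP lP : ℝ) (hCP : 1 ≤ CP) (hlP : 1 ≤ lP) : ¬ WeakPoincare (dmu ι) 1 CP lP := by
  intro hW
  have hprop := H.proper
  have hlf := H.locFin
  have hlP0 : 0 < lP := by linarith
  set R := 1 / lP with hR
  have hR0 : 0 < R := by positivity
  have hR1 : R ≤ 1 := by rw [hR, div_le_one hlP0]; exact hlP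
  set η := min 1 (min (R ^ 3) (1 / (16 * CP))) with hη
  have hη0 : 0 < η := by
    rw [hη]; refine lt_min one_pos (lt_min (by positivity) (by positivity))
  have hη1 : η ≤ 1 := min_le_left _ _
  have hη2 : η ≤ R ^ 3 := (min_le_right _ _).trans (min_le_left _ _)
  have hη3 : η ≤ 1 / (16 * CP) := (min_le_right _ _).trans (min_le_right _ _)
  obtain ⟨r, hr0, hrη, hN⟩ := hvol η hη0
  set N := {v : V | v ∈ ball (0 : V) 1 ∧ ∃ k ∈ K, dist v k < r} with hNdef
  set h : X → ℝ := fun x => infDist x (range (ι false)) with hh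
  have hhl : LipschitzWith 1 h := lipschitz_infDist_pt _
  have hhn : ∀ x, 0 ≤ h x := fun x => infDist_nonneg
  have hfalse : ∀ v, h (ι false v) = 0 := fun v => infDist_zero_of_mem (mem_range_self v)
  have htrue : ∀ v, h (ι true v) < r → ∃ k ∈ K, dist v k < r := by
    intro v hv
    obtain ⟨y, ⟨w, rfl⟩, hy⟩ := (infDist_lt_iff (range_nonempty _)).1 hv
    obtain ⟨k, hk, hd⟩ := H.cross true false (by simp) v w
    exact ⟨k, hk, by linarith [dist_nonneg (x := k) (y := w)]⟩
  set A : Set X := {x | 0 < h x ∧ h x < r} with hA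
  have hAo : IsOpen A := (isOpen_lt continuous_const hhl.continuous).inter
    (isOpen_lt hhl.continuous continuous_const)
  set ρ : X → ℝ≥0∞ := A.indicator fun _ => ENNReal.ofReal (1 / r) with hρ
  set u : X → ℝ := fun x => min 1 (h x / r) with hu
  have huc : Continuous u := continuous_const.min (hhl.continuous.div_const r)
  have key := hW u huc.locallyIntegrable ρ (measurable_const.indicator hAo.measurableSet)
    (trunc_ug hhl hhn hr0) (ι false 0) R hR0
  rw [show lP * R = 1 by rw [hR]; field_simp] at key
  set m := ⨍ z in ball (ι false 0) R, u z ∂(dmu ι) with hm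
  -- upper bound
  have hIntg : ∫⁻ y in ball (ι false 0) 1, ρ y ^ (1:ℝ) ∂(dmu ι) ≤ ENNReal.ofReal η := by
    simp only [ENNReal.rpow_one]
    rw [H.setLInt, H.pre_ball_glue h0, H.pre_ball_glue h0]
    have z1 : ∀ v, ρ (ι false v) = 0 := by
      intro v
      refine indicator_of_notMem ?_ _
      simp [hA, hfalse]
    simp only [z1, lintegral_zero, zero_add]
    have hm2 : MeasurableSet (ι true ⁻¹' A) := (H.emb true).measurable hAo.measurableSet
    have : ∀ v, ρ (ι true v) = (ι true ⁻¹' A).indicator (fun _ => ENNReal.ofReal (1/r)) v :=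
      fun v => rfl
    simp only [this]
    rw [lintegral_indicator hm2, setLIntegral_const, Measure.restrict_apply hm2]
    calc _ ≤ ENNReal.ofReal (1/r) * volume N := by
          gcongr
          rintro v ⟨hv, hvb⟩
          exact ⟨hvb, htrue v hv.2⟩
      _ ≤ ENNReal.ofReal (1/r) * ENNReal.ofReal (η * r) := by gcongr
      _ = ENNReal.ofReal η := by
          rw [← ENNReal.ofReal_mul (by positivity)]; congr 1; field_simp
  have hupper : ENNReal.ofReal (CP * diam (ball (ι false 0) R)) *
      (⨍⁻ y in ball (ι false 0) 1, ρ y ^ (1:ℝ) ∂(dmu ι)) ^ (1 / (1:ℝ)) ≤ ENNReal.ofReal (1/8) := by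
    have e1 : ⨍⁻ y in ball (ι false 0) 1, ρ y ^ (1:ℝ) ∂(dmu ι) ≤ ENNReal.ofReal η := by
      rw [setLAverage_eq]
      refine le_trans ?_ hIntg
      refine ENNReal.div_le_of_le_mul (le_mul_of_one_le_right' ?_)
      refine le_trans ?_ (H.mu_ball_ge _ one_pos)
      rw [ENNReal.one_le_ofReal]; norm_num
    have e2 : diam (ball (ι false 0) R) ≤ 2 := (Metric.diam_ball hR0.le).trans (by linarith)
    rw [div_one, ENNReal.rpow_one]
    calc _ ≤ ENNReal.ofReal (CP * 2) * ENNReal.ofReal η := by gcongr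
      _ = ENNReal.ofReal (CP * 2 * η) := by rw [← ENNReal.ofReal_mul (by positivity)]
      _ ≤ _ := by
        apply ENNReal.ofReal_le_ofReal
        calc CP * 2 * η ≤ CP * 2 * (1 / (16 * CP)) := by gcongr
          _ = 1/8 := by field_simp; norm_num
  -- lower bound
  have hcont : Continuous fun y => |u y - m| := by fun_prop
  have hio : IntegrableOn (fun y => |u y - m|) (ball (ι false 0) R) (dmu ι) :=
    (hcont.locallyIntegrable.integrableOn_isCompact
      (isCompact_closedBall (ι false 0) R)).mono_set ball_subset_closedBall
  have hlower : ENNReal.ofReal (1/4) ≤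
      ENNReal.ofReal (⨍ y in ball (ι false 0) R, |u y - m| ∂(dmu ι)) := by
    rw [ofReal_setAverage hio (ae_of_all _ fun _ => abs_nonneg _)]
    set S : Set V := ball 0 R ∩ {v | r ≤ h (ι true v)} with hS
    have hSm : MeasurableSet S := measurableSet_ball.inter
      (measurableSet_le measurable_const (hhl.continuous.comp (H.iso true).continuous).measurable)
    have hSv : ENNReal.ofReal (4 * R ^ 3) ≤ volume S := by
      have h1 : volume (ball (0:V) R) ≤ volume S + volume N := by
        refine (measure_mono ?_).trans (measure_union_le _ _)
        intro v hv
        by_cases hvr : r ≤ h (ι true v)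
        · exact Or.inl ⟨hv, hvr⟩
        · exact Or.inr ⟨ball_subset_ball hR1 hv, htrue v (not_le.1 hvr)⟩
      have h2 : volume N ≤ ENNReal.ofReal (R ^ 3) := hN.trans (ENNReal.ofReal_le_ofReal (by
        nlinarith))
      rw [vol_ball _ hR0] at h1
      have h3 : ENNReal.ofReal (7 * R ^ 3) + ENNReal.ofReal (R ^ 3) ≤
          volume S + ENNReal.ofReal (R ^ 3) := by
        rw [← ENNReal.ofReal_add (by positivity) (by positivity)]
        refine le_trans (le_of_eq ?_) (h1.trans (add_le_add le_rfl h2))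
        congr 1; ring
      refine le_trans (ENNReal.ofReal_le_ofReal ?_)
        ((ENNReal.add_le_add_iff_right ENNReal.ofReal_ne_top).1 h3)
      nlinarith [pow_pos hR0 3]
    have hnum : ENNReal.ofReal (4 * R ^ 3) ≤
        ∫⁻ y in ball (ι false 0) R, ENNReal.ofReal |u y - m| ∂(dmu ι) := by
      rw [H.setLInt, H.pre_ball_glue h0, H.pre_ball_glue h0]
      have a1 : ENNReal.ofReal |m| * ENNReal.ofReal (4 * R ^ 3) ≤
          ∫⁻ v in ball (0:V) R, ENNReal.ofReal |u (ι false v) - m| := by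
        have : ∀ v, u (ι false v) = 0 := by intro v; simp [hu, hfalse]
        simp only [this, zero_sub, abs_neg]
        rw [setLIntegral_const, vol_ball _ hR0]
        gcongr
        norm_num
      have a2 : ENNReal.ofReal |1 - m| * ENNReal.ofReal (4 * R ^ 3) ≤
          ∫⁻ v in ball (0:V) R, ENNReal.ofReal |u (ι true v) - m| := by
        refine le_trans ?_ (lintegral_mono_set (inter_subset_left : S ⊆ _))
        calc _ ≤ ∫⁻ v in S, ENNReal.ofReal |1 - m| := by
              rw [setLIntegral_const]; gcongr
          _ ≤ _ := by
              refine setLIntegral_mono' hSm fun v hv => ?_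
              have : u (ι true v) = 1 := by
                simp only [hu]
                exact min_eq_left ((one_le_div hr0).2 hv.2)
              rw [this]
      refine le_trans ?_ (add_le_add a1 a2)
      rw [← add_mul, ← ENNReal.ofReal_add (abs_nonneg _) (abs_nonneg _)]
      refine le_mul_of_one_le_left' ?_
      rw [ENNReal.one_le_ofReal]
      have := abs_add_le m (1 - m)
      simpa using this
    rw [ENNReal.le_div_iff_mul_le (Or.inr ?_) (Or.inr ?_)]
    · refine le_trans ?_ hnum
      calc _ ≤ ENNReal.ofReal (1/4) * ENNReal.ofReal (16 * R ^ 3) := by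
            gcongr; exact H.mu_ball_le _ hR0
        _ = _ := by
            rw [← ENNReal.ofReal_mul (by norm_num)]; congr 1; ring
    · intro hz
      rw [hz] at hnum
      simp at hnum
      nlinarith [pow_pos hR0 3]
    · exact ((hasFiniteIntegral_iff_ofReal (ae_of_all _ fun _ => abs_nonneg _)).1 hio.2).ne
  have := (hlower.trans key).trans hupper
  rw [ENNReal.ofReal_le_ofReal_iff (by norm_num)] at this
  norm_num at this

end Dbl

lemma mod_top_of {X : Type} [MeasurableSpace X] (μ : Measure X) (q : ℝ) (M : Set (Measure X))
    (h : ¬ ∃ ρ : X → ℝ≥0∞, Admissible M ρ) : modulus μ q M = ⊤ := by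
  unfold modulus
  simp only [iInf_eq_top]
  exact fun ρ hρ => absurd ⟨ρ, hρ⟩ h

end DF


/-- Counterexample: the duality fails without the 1-Poincaré inequality. For every
`ε ∈ (0,1)` there is a complete geodesic Ahlfors 3-regular space supporting a weak
`(1+ε)`-Poincaré inequality in which the separating surface family of some condenser
admits no admissible function, while the path modulus is nondegenerate. -/
theorem duality_fails_without_one_poincare :
    ∀ ε : ℝ, 0 < ε → ε < 1 →
    ∃ (X : Type) (_i1 : MetricSpace X) (_i2 : MeasurableSpace X) (_i3 : BorelSpace X)
      (μ : Measure X) (a A CP lP : ℝ),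
      CompleteSpace X ∧ IsGeodesicSpace X ∧ BorelRegular μ ∧
      AhlforsRegular μ 3 a A ∧ 1 ≤ CP ∧ 1 ≤ lP ∧ WeakPoincare μ (1 + ε) CP lP ∧
      ∃ G E F : Set X,
        IsDomainWithCompactClosure G ∧ IsNondegContinuum E ∧ IsNondegContinuum F ∧
        E ⊆ G ∧ F ⊆ G ∧ Disjoint E F ∧
        0 < modulus μ 3 (pathFamily E F G) ∧ modulus μ 3 (pathFamily E F G) ≠ ⊤ ∧
        (¬ ∃ ρ : X → ℝ≥0∞, Admissible (surfaceFamilyH 2 E F G) ρ) ∧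
        modulus μ (3 / 2) (surfaceFamilyH 2 E F G) = ⊤ ∧
        (∀ C : ℝ, ¬ (modulus μ 3 (pathFamily E F G) ^ ((1 : ℝ) / 3) *
            modulus μ (3 / 2) (surfaceFamilyH 2 E F G) ^ ((2 : ℝ) / 3) ≤
            ENNReal.ofReal C)) ∧
        (∀ CP' lP' : ℝ, 1 ≤ CP' → 1 ≤ lP' → ¬ WeakPoincare μ 1 CP' lP') := by
  intro ε hε0 hε1
  obtain ⟨K, t, C, ht, hK, h0, hpos, hν, hH, hvol⟩ := DF.exists_fractal hε0 hε1
  obtain ⟨X, iX, ι, H⟩ := DF.exists_dbl K hK h0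
  letI : MeasurableSpace X := borel X
  haveI : BorelSpace X := ⟨rfl⟩
  obtain ⟨CP, hCP, hP⟩ := H.poincare hε0 ht hν
  have hno := H.no_admissible h0 hK hpos hH
  have htop := DF.mod_top_of (DF.dmu ι) (3/2) _ hno
  have hmp := H.mod_pos h0 (t := t) (C := C) (by linarith) hpos hν
  refine ⟨X, iX, borel X, ⟨rfl⟩, DF.dmu ι, 8, 16, CP, 3, H.complete, H.geodesic,
    DF.borelRegular_all _, H.ahlfors, hCP, by norm_num, hP, DF.GG ι, DF.EE ι, DF.FF ι,
    H.G_domain h0, H.nondeg _ _, H.nondeg _ _, H.E_sub h0, H.F_sub h0, H.EF_disj, hmp,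
    H.mod_ne_top, hno, htop, ?_, fun CP' lP' h1 h2 => H.not_one_poincare h0 hvol CP' lP' h1 h2⟩
  intro C'
  rw [htop, ENNReal.top_rpow_of_pos (by norm_num), ENNReal.mul_top, top_le_iff]
  · exact ENNReal.ofReal_ne_top
  · exact (ENNReal.rpow_pos_of_nonneg hmp (by norm_num)).ne'
end
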